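/- arXiv:1304.4784 — 2 statements merged into one kernel-verified Lean document; each statement's English description precedes it below -/
import Mathlib

section
/- Let n ≥ 2, let F_n be the free group of rank n, and let m ≥ 3 be an integer. The box space of F_n corresponding to the derived m-series is a bounded geometry metric space that coarsely embeds into Hilbert space ℓ²(ℕ,ℝ) but does not have property A. -/
open Filter
open scoped ENNReal NNReal
/-- `F` is a coarse embedding of `(X, dX)` into `(Y, dY)`: there are non-decreasing
functions `ρ₋, ρ₊` tending to infinity which control the distortion of distances. -/
def CoarseEmbeddingWith {X Y : Type*} (dX : X → X → ℝ) (dY : Y → Y → ℝ) (F : X → Y) : Prop :=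
  ∃ ρminus ρplus : ℝ → ℝ, Monotone ρminus ∧ Monotone ρplus ∧
    Tendsto ρminus atTop atTop ∧ Tendsto ρplus atTop atTop ∧
    ∀ x x' : X, ρminus (dX x x') ≤ dY (F x) (F x') ∧ dY (F x) (F x') ≤ ρplus (dX x x')

def IsPseudoMetricOn {X : Type*} (d : X → X → ℝ) : Prop :=
  (∀ x, d x x = 0) ∧ (∀ x y, d x y = d y x) ∧ ∀ x y z, d x z ≤ d x y + d y z

def IsMetricOn {X : Type*} (d : X → X → ℝ) : Prop :=
  (∀ x y, d x y = 0 ↔ x = y) ∧ (∀ x y, d x y = d y x) ∧ ∀ x y z, d x z ≤ d x y + d y z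

/-- The diameter of a space with distance function `dY`. -/
noncomputable def spaceDiam {Y : Type*} (dY : Y → Y → ℝ) : ℝ :=
  sSup (Set.range fun p : Y × Y => dY p.1 p.2)

/-- `D` is a coarse disjoint union of the spaces `(Y i, dY i)`: it restricts to `dY i` on each
component `Y i`, and the distance between two distinct components exceeds the maximum of
their diameters. -/
def IsCoarseDisjointUnionOf {ι : Type*} {Y : ι → Type*} (dY : ∀ i, Y i → Y i → ℝ)
    (D : (Σ i, Y i) → (Σ i, Y i) → ℝ) : Prop :=
  (∀ (i : ι) (x y : Y i), D ⟨i, x⟩ ⟨i, y⟩ = dY i x y) ∧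
  ∀ i j, i ≠ j → ∀ (x : Y i) (y : Y j),
    max (spaceDiam (dY i)) (spaceDiam (dY j)) < D ⟨i, x⟩ ⟨j, y⟩


/-- The word distance on the coset space `G ⧸ N` induced by the images of the
generating set `S` (using the symmetrized generating set `S ∪ S⁻¹`). -/
noncomputable def quotWordDist {G : Type*} [Group G] (S : Set G) (N : Subgroup G)
    (x y : G ⧸ N) : ℕ :=
  sInf {n | ∃ (g : G) (l : List G), (∀ a ∈ l, a ∈ S ∨ a⁻¹ ∈ S) ∧
    QuotientGroup.mk g = x ∧ QuotientGroup.mk (g * l.prod) = y ∧ l.length = n}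

/-- The derived `m`-series of `G`: `G_1 = G` and `G_{i+1} = [G_i, G_i]·G_i^m`
(here indexed from `0`, so `derivedMSeries G m i` is `G_{i+1}`). -/
def derivedMSeries (G : Type*) [Group G] (m : ℕ) : ℕ → Subgroup G
  | 0 => ⊤
  | i + 1 => ⁅derivedMSeries G m i, derivedMSeries G m i⁆ ⊔
      Subgroup.closure {x : G | ∃ y ∈ derivedMSeries G m i, x = y ^ m}

/-- A space with distance function `d` has bounded geometry: balls of any given radius
have uniformly bounded cardinality. -/
def BoundedGeometry {X : Type*} (d : X → X → ℝ) : Prop :=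
  ∀ R : ℝ, ∃ C : ℕ, ∀ x : X, Nat.card {y : X | d x y ≤ R} ≤ C

/-- Yu's property A for a discrete bounded geometry space with distance function `d`:
for all `R, ε > 0` there are `S > 0` and unit vectors `φ x ∈ ℓ²(X)` supported in
`B_S(x)` with `|1 - ⟪φ x₁, φ x₂⟫| ≤ ε` whenever `d x₁ x₂ ≤ R`. -/
def HasPropertyA {X : Type*} (d : X → X → ℝ) : Prop :=
  ∀ R > (0 : ℝ), ∀ ε > (0 : ℝ), ∃ S > (0 : ℝ), ∃ φ : X → X → ℝ,
    (∀ x, (Function.support (φ x)).Finite) ∧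
    (∀ x, ∑ᶠ y, φ x y * φ x y = 1) ∧
    (∀ x₁ x₂, d x₁ x₂ ≤ R → |1 - ∑ᶠ y, φ x₁ y * φ x₂ y| ≤ ε) ∧
    (∀ x y, φ x y ≠ 0 → d x y ≤ S)

section Chains

variable {α : Type*} {Q : Type*} [Group Q] (m : ℕ) (π : FreeGroup α →* Q)

/-- The edge of the Cayley graph traversed from `v` along the letter `x`. -/
def bxEdge (v : Q) (x : α × Bool) : Q × α :=
  if x.2 then (v, x.1) else (v * π (FreeGroup.mk [x]), x.1)

/-- The sign of a letter. -/
def bxSgn (x : α × Bool) : ZMod m := if x.2 then 1 else -1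

/-- The edges traversed by a path. -/
def bxEdges : Q → List (α × Bool) → List (Q × α)
  | _, [] => []
  | v, x :: l => bxEdge π v x :: bxEdges (v * π (FreeGroup.mk [x])) l

open Classical in
/-- The flow mod `m` of a path. -/
noncomputable def bxChn : Q → List (α × Bool) → (Q × α → ZMod m)
  | _, [] => 0
  | v, x :: l => Pi.single (bxEdge π v x) (bxSgn m x) + bxChn (v * π (FreeGroup.mk [x])) l

theorem bx_pi_cons (x : α × Bool) (l : List (α × Bool)) :
    π (FreeGroup.mk (x :: l)) = π (FreeGroup.mk [x]) * π (FreeGroup.mk l) := by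
  rw [← map_mul, FreeGroup.mul_mk]; rfl

theorem bx_pi_append (l l' : List (α × Bool)) :
    π (FreeGroup.mk (l ++ l')) = π (FreeGroup.mk l) * π (FreeGroup.mk l') := by
  rw [← map_mul, FreeGroup.mul_mk]

theorem bx_mk_not (a : α) (b : Bool) :
    FreeGroup.mk [(a, !b)] = (FreeGroup.mk [(a, b)])⁻¹ := by
  simp [FreeGroup.inv_mk, FreeGroup.invRev]

theorem bxEdge_not (v : Q) (a : α) (b : Bool) :
    bxEdge π (v * π (FreeGroup.mk [(a, b)])) (a, !b) = bxEdge π v (a, b) := by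
  cases b
  · simp [bxEdge]
  · have := bx_mk_not a true
    simp only [Bool.not_true] at this
    simp only [bxEdge, this, map_inv, mul_inv_cancel_right, Bool.not_true, Bool.false_eq_true,
      if_false, if_true]

theorem bxSgn_not (a : α) (b : Bool) : bxSgn m (a, !b) = - bxSgn m (a, b) := by
  cases b <;> simp [bxSgn]

theorem bxChn_append (v : Q) (l l' : List (α × Bool)) :
    bxChn m π v (l ++ l') = bxChn m π v l + bxChn m π (v * π (FreeGroup.mk l)) l' := by
  induction l generalizing v with
  | nil => simp [bxChn, ← FreeGroup.one_eq_mk]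
  | cons x l ih => rw [List.cons_append, bxChn, ih, bxChn, bx_pi_cons π x l, mul_assoc, add_assoc]

theorem bxChn_step (v : Q) {l l' : List (α × Bool)} (h : FreeGroup.Red.Step l l') :
    bxChn m π v l = bxChn m π v l' := by
  classical
  obtain ⟨⟩ := h
  rename_i L1 L2 x b
  rw [bxChn_append, bxChn_append]
  congr 1
  rw [bxChn, bxChn, bxEdge_not, bxSgn_not, ← add_assoc, ← Pi.single_add, add_neg_cancel,
    Pi.single_zero, zero_add]
  congr 1
  rw [bx_mk_not, map_inv, mul_inv_cancel_right]

/-- The flow of an element of the free group, starting from `v`. -/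
noncomputable def bxFlow (v : Q) (w : FreeGroup α) : Q × α → ZMod m :=
  Quot.lift (bxChn m π v) (fun _ _ h => bxChn_step m π v h) w

theorem bxFlow_mk (v : Q) (l : List (α × Bool)) :
    bxFlow m π v (FreeGroup.mk l) = bxChn m π v l := rfl

theorem bxFlow_one (v : Q) : bxFlow m π v 1 = 0 := by
  rw [FreeGroup.one_eq_mk, bxFlow_mk]; rfl

theorem bxFlow_mul (v : Q) (w w' : FreeGroup α) :
    bxFlow m π v (w * w') = bxFlow m π v w + bxFlow m π (v * π w) w' := by
  obtain ⟨l, rfl⟩ := Quot.exists_rep w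
  obtain ⟨l', rfl⟩ := Quot.exists_rep w'
  exact bxChn_append m π v l l'

theorem bxChn_eq_zero (v : Q) (l : List (α × Bool)) (e : Q × α) (h : e ∉ bxEdges π v l) :
    bxChn m π v l e = 0 := by
  classical
  induction l generalizing v with
  | nil => rfl
  | cons x l ih =>
    simp only [bxEdges, List.mem_cons, not_or] at h
    rw [bxChn, Pi.add_apply, ih _ h.2, Pi.single_eq_of_ne h.1, add_zero]

theorem bxChn_cons_self (v : Q) (x : α × Bool) (l : List (α × Bool))
    (h : bxEdge π v x ∉ bxEdges π (v * π (FreeGroup.mk [x])) l) :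
    bxChn m π v (x :: l) (bxEdge π v x) = bxSgn m x := by
  classical
  rw [bxChn, Pi.add_apply, bxChn_eq_zero _ _ _ _ _ h, Pi.single_eq_same, add_zero]

theorem bxEdges_length (v : Q) (l : List (α × Bool)) : (bxEdges π v l).length = l.length := by
  induction l generalizing v with
  | nil => rfl
  | cons x l ih => simp [bxEdges, ih]

theorem bxEdges_append (v : Q) (l l' : List (α × Bool)) :
    bxEdges π v (l ++ l') = bxEdges π v l ++ bxEdges π (v * π (FreeGroup.mk l)) l' := by
  induction l generalizing v with
  | nil => simp [bxEdges, ← FreeGroup.one_eq_mk]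
  | cons x l ih => rw [List.cons_append, bxEdges, ih, bxEdges, bx_pi_cons π x l, mul_assoc]; rfl

theorem bxEdges_mem (v : Q) (l : List (α × Bool)) (e : Q × α) (h : e ∈ bxEdges π v l) :
    ∃ l₁ y l₂, l = l₁ ++ y :: l₂ ∧ e = bxEdge π (v * π (FreeGroup.mk l₁)) y := by
  induction l generalizing v with
  | nil => simp [bxEdges] at h
  | cons x l ih =>
    simp only [bxEdges, List.mem_cons] at h
    rcases h with h | h
    · exact ⟨[], x, l, rfl, by simpa [← FreeGroup.one_eq_mk] using h⟩
    · obtain ⟨l₁, y, l₂, rfl, h2⟩ := ih _ h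
      exact ⟨x :: l₁, y, l₂, rfl, by rw [h2, bx_pi_cons π x l₁, mul_assoc]⟩

/-- Girth condition. -/
def BxGirth [DecidableEq α] (K : ℕ) : Prop := ∀ w, π w = 1 → w ≠ 1 → K < w.norm

variable {π} in
theorem BxGirth.nil [DecidableEq α] {K : ℕ} (hK : BxGirth π K) {l : List (α × Bool)}
    (hl : FreeGroup.IsReduced l) (hlen : l.length ≤ K) (h : π (FreeGroup.mk l) = 1) : l = [] := by
  by_contra hne
  have h1 : (FreeGroup.mk l).toWord = l := by rw [FreeGroup.toWord_mk, hl.reduce_eq]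
  have := hK _ h (by
    intro h2
    rw [h2, FreeGroup.toWord_one] at h1
    exact hne h1.symm)
  have h3 := FreeGroup.norm_mk_le (L₁ := l)
  omega

theorem bxEdges_nodup [DecidableEq α] {K : ℕ} (hK : BxGirth π K) (v : Q) (l : List (α × Bool))
    (hl : FreeGroup.IsReduced l) (hlen : l.length ≤ K + 1) : (bxEdges π v l).Nodup := by
  induction l generalizing v with
  | nil => simp [bxEdges]
  | cons x l ih =>
    rw [bxEdges, List.nodup_cons]
    refine ⟨fun hmem => ?_, ih _ (hl.infix (List.suffix_cons x l).isInfix) (by simp at hlen; omega)⟩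
    obtain ⟨l₁, y, l₂, rfl, h2⟩ := bxEdges_mem π _ _ _ hmem
    obtain ⟨a, b⟩ := x
    obtain ⟨a', b'⟩ := y
    have haa : a = a' := by
      have := congrArg Prod.snd h2
      unfold bxEdge at this
      split_ifs at this <;> simpa using this
    subst haa
    simp only [List.length_cons, List.length_append] at hlen
    by_cases hb : b' = b
    · subst hb
      have h3 : π (FreeGroup.mk ((a, b') :: l₁)) = 1 := by
        rw [bx_pi_cons]
        have := congrArg Prod.fst h2
        unfold bxEdge at this
        split_ifs at this <;> simp only at this
        · rw [mul_assoc] at this; exact left_eq_mul.mp this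
        · rw [mul_left_inj, mul_assoc] at this; exact left_eq_mul.mp this
      have := hK.nil (hl.infix (L₁ := (a, b') :: l₁) ⟨[], (a, b') :: l₂, by simp⟩)
        (by simp; omega) h3
      simp at this
    · obtain rfl : b' = !b := by cases b <;> cases b' <;> simp_all
      have h3 : π (FreeGroup.mk l₁) = 1 := by
        rw [← bxEdge_not] at h2
        have := congrArg Prod.fst h2
        unfold bxEdge at this
        split_ifs at this <;> simp only at this
        · exact left_eq_mul.mp this
        · rw [mul_left_inj] at this; exact left_eq_mul.mp this
      have := hK.nil (hl.infix (L₁ := l₁) ⟨[(a, b)], (a, !b) :: l₂, by simp⟩)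
        (by omega) h3
      subst this
      have h5 := hl.infix (L₁ := [(a, b), (a, !b)]) ⟨[], l₂, by simp⟩
      simp [FreeGroup.IsReduced] at h5

/-- The girth strictly increases. -/
theorem bxFlow_ne_zero [DecidableEq α] (hm : 2 ≤ m) {K : ℕ} (hK : BxGirth π K) (v : Q)
    (w : FreeGroup α) (hw : w ≠ 1) (hlen : w.norm ≤ K + 1) : bxFlow m π v w ≠ 0 := by
  have : Fact (1 < m) := ⟨by omega⟩
  classical
  have hnd := bxEdges_nodup π hK v w.toWord FreeGroup.isReduced_toWord hlen
  rw [← FreeGroup.mk_toWord (x := w), bxFlow_mk]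
  have hne : w.toWord ≠ [] := by simpa using hw
  generalize w.toWord = l at hnd hne
  match l, hnd, hne with
  | x :: l, hnd, _ =>
    rw [bxEdges, List.nodup_cons] at hnd
    intro h
    have := congrFun h (bxEdge π v x)
    rw [bxChn_cons_self m π v x l hnd.1] at this
    unfold bxSgn at this
    split_ifs at this <;> simp at this

theorem bxFlow_support_card [DecidableEq α] [Finite Q] [Finite α] (v : Q) (w : FreeGroup α) :
    (Function.support (bxFlow m π v w)).ncard ≤ w.norm := by
  classical
  rw [FreeGroup.norm, ← bxEdges_length π v]
  have h1 : Function.support (bxFlow m π v w) ⊆ ((bxEdges π v w.toWord).toFinset : Set _) := by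
    intro e he
    by_contra hne
    apply he
    rw [← FreeGroup.mk_toWord (x := w), bxFlow_mk]
    exact bxChn_eq_zero _ _ _ _ _ (by simpa using hne)
  refine (Set.ncard_le_ncard h1 (Finset.finite_toSet _)).trans ?_
  rw [Set.ncard_coe_finset]
  exact List.toFinset_card_le _

/-- Boundary: net outflow as a sum over letters. -/
noncomputable def bxBd [Fintype α] (f : Q × α → ZMod m) (v : Q) : ZMod m :=
  ∑ x : α × Bool, bxSgn m x * f (bxEdge π v x)

theorem bxBd_add [Fintype α] (f g : Q × α → ZMod m) :
    bxBd m π (f + g) = bxBd m π f + bxBd m π g := by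
  funext v
  simp [bxBd, mul_add, Finset.sum_add_distrib]

theorem bxBd_sub [Fintype α] (f g : Q × α → ZMod m) :
    bxBd m π (f - g) = bxBd m π f - bxBd m π g := by
  funext v
  simp [bxBd, mul_sub, Finset.sum_sub_distrib]

theorem bxBd_zero [Fintype α] : bxBd m π (0 : Q × α → ZMod m) = 0 := by
  funext v
  simp [bxBd]

open Classical in
theorem bxBd_single [Fintype α] (v : Q) (a : α) (c : ZMod m) :
    bxBd m π (Pi.single (v, a) c) = Pi.single v c - Pi.single (v * π (FreeGroup.of a)) c := by
  funext u
  rw [bxBd, Fintype.sum_prod_type]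
  rw [Finset.sum_eq_single a]
  · have h : FreeGroup.mk [(a, false)] = (FreeGroup.of a)⁻¹ := bx_mk_not a true
    simp [bxSgn, bxEdge, Pi.single_apply, h, mul_inv_eq_iff_eq_mul, sub_eq_add_neg]
    split_ifs <;> simp
  · intro b _ hb
    simp [bxEdge, Pi.single_apply, hb]
  · simp

open Classical in
theorem bxBd_letter [Fintype α] (v : Q) (x : α × Bool) :
    bxBd m π (Pi.single (bxEdge π v x) (bxSgn m x)) =
      Pi.single v 1 - Pi.single (v * π (FreeGroup.mk [x])) 1 := by
  obtain ⟨a, b⟩ := x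
  cases b
  · have h : FreeGroup.mk [(a, false)] = (FreeGroup.of a)⁻¹ := bx_mk_not a true
    simp only [bxEdge, bxSgn, h]
    simp only [Bool.false_eq_true, if_false]
    rw [bxBd_single]
    simp [Pi.single_neg]
    abel
  · simp only [bxEdge, bxSgn, if_true]
    rw [bxBd_single]; rfl

open Classical in
theorem bxBd_flow [Fintype α] (v : Q) (w : FreeGroup α) :
    bxBd m π (bxFlow m π v w) = Pi.single v 1 - Pi.single (v * π w) 1 := by
  obtain ⟨l, rfl⟩ := Quot.exists_rep w
  change bxBd m π (bxChn m π v l) = Pi.single v 1 - Pi.single (v * π (FreeGroup.mk l)) 1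
  induction l generalizing v with
  | nil => simp [bxChn, bxBd_zero, ← FreeGroup.one_eq_mk]
  | cons x l ih =>
    rw [bxChn, bxBd_add, ih, bxBd_letter, bx_pi_cons π x l, mul_assoc]
    abel

/-- Reduced words inside the support of a flow have bounded length. -/
theorem bx_support_word [DecidableEq α] [Finite Q] [Finite α] {K : ℕ} (hK : BxGirth π K)
    (f : Q × α → ZMod m) (hf : (Function.support f).ncard ≤ K) (v : Q) (l : List (α × Bool))
    (hl : FreeGroup.IsReduced l) (hlen : l.length ≤ K + 1) (hs : ∀ e ∈ bxEdges π v l, f e ≠ 0) :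
    l.length ≤ K := by
  classical
  have hnd := bxEdges_nodup π hK v l hl hlen
  rw [← bxEdges_length π v, ← List.toFinset_card_of_nodup hnd]
  refine le_trans ?_ hf
  rw [← Set.ncard_coe_finset]
  exact Set.ncard_le_ncard (fun e he => hs e (by simpa using he)) (Set.toFinite _)

theorem bx_sgn_mul_ne {m : ℕ} (x : α × Bool) {c : ZMod m} (hc : c ≠ 0) : bxSgn m x * c ≠ 0 := by
  unfold bxSgn
  split_ifs <;> simpa using hc

/-- Walking inside the support of a flow one reaches a vertex with nonzero boundary. -/
theorem bx_walk [DecidableEq α] [Finite Q] [Fintype α] {K : ℕ} (hK : BxGirth π K)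
    (f : Q × α → ZMod m) (hf : (Function.support f).ncard ≤ K) (v : Q) (x : α × Bool)
    (hx : f (bxEdge π v x) ≠ 0) :
    ∃ l : List (α × Bool), l ≠ [] ∧ FreeGroup.IsReduced l ∧ l.length ≤ K ∧
      (∀ e ∈ bxEdges π v l, f e ≠ 0) ∧ bxBd m π f (v * π (FreeGroup.mk l)) ≠ 0 := by
  by_contra hcon
  push Not at hcon
  have key : ∀ j ≤ K, ∃ (l : List (α × Bool)) (y : α × Bool),
      FreeGroup.IsReduced (l ++ [y]) ∧ l.length = j ∧
      (∀ e ∈ bxEdges π v (l ++ [y]), f e ≠ 0) := by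
    intro j
    induction j with
    | zero =>
      intro _
      exact ⟨[], x, by simp, rfl, by simpa [bxEdges] using hx⟩
    | succ j ih =>
      intro hj
      obtain ⟨l, y, h1, h2, h3⟩ := ih (by omega)
      have h4 := hcon (l ++ [y]) (by simp) h1 (by simp; omega) h3
      obtain ⟨a, b⟩ := y
      set u := v * π (FreeGroup.mk (l ++ [(a, b)])) with hu
      have hu' : u = v * π (FreeGroup.mk l) * π (FreeGroup.mk [(a, b)]) := by
        rw [hu, bx_pi_append, mul_assoc]
      have h5 : f (bxEdge π u (a, !b)) ≠ 0 := by
        rw [hu', bxEdge_not]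
        apply h3
        rw [bxEdges_append]
        simp [bxEdges]
      obtain ⟨z, hz, hz2⟩ : ∃ z, z ≠ (a, !b) ∧ f (bxEdge π u z) ≠ 0 := by
        by_contra hz
        push Not at hz
        rw [bxBd, Finset.sum_eq_single (a, !b)] at h4
        · exact bx_sgn_mul_ne _ h5 h4
        · intro z _ hz'
          rw [hz z hz', mul_zero]
        · simp
      refine ⟨l ++ [(a, b)], z, ?_, by simp [h2], ?_⟩
      · refine FreeGroup.IsReduced.append_overlap h1 ?_ (by simp)
        obtain ⟨c, d⟩ := z
        simp only [List.cons_append, List.nil_append, FreeGroup.IsReduced,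
          List.isChain_cons_cons, List.isChain_singleton, and_true]
        rintro rfl
        by_contra hbd
        apply hz
        cases b <;> cases d <;> simp_all
      · intro e he
        rw [bxEdges_append, List.mem_append] at he
        rcases he with he | he
        · exact h3 e he
        · simp only [bxEdges, List.mem_singleton] at he
          rw [he]; exact hz2
  obtain ⟨l, y, h1, h2, h3⟩ := key K le_rfl
  have := bx_support_word m π hK f hf v _ h1 (by simp; omega) h3
  simp at this
  omega

theorem bx_cycle_zero [DecidableEq α] [Finite Q] [Fintype α] {K : ℕ} (hK : BxGirth π K)
    (f : Q × α → ZMod m) (hf : (Function.support f).ncard ≤ K) (hb : bxBd m π f = 0) : f = 0 := by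
  by_contra hne
  obtain ⟨⟨v, a⟩, he⟩ := Function.ne_iff.mp hne
  obtain ⟨l, -, -, -, -, h⟩ := bx_walk m π hK f hf v (a, true) (by simpa [bxEdge] using he)
  exact h (by rw [hb]; rfl)

/-- A flow of small support is the flow of a short path. -/
theorem bx_short [DecidableEq α] [Finite Q] [Fintype α] (hm : 2 ≤ m) {K : ℕ}
    (hK : BxGirth π K) (v : Q) (w : FreeGroup α)
    (hf : (Function.support (bxFlow m π v w)).ncard ≤ K) :
    ∃ w' : FreeGroup α, w'.norm ≤ K ∧ π w' = π w ∧ bxFlow m π v w' = bxFlow m π v w := by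
  classical
  have : Fact (1 < m) := ⟨by omega⟩
  by_cases hw : π w = 1
  · refine ⟨1, by simp, by simp [hw], ?_⟩
    rw [bxFlow_one, bx_cycle_zero m π hK _ hf]
    rw [bxBd_flow, hw, mul_one, sub_self]
  · have hb : bxBd m π (bxFlow m π v w) v ≠ 0 := by
      rw [bxBd_flow, Pi.sub_apply, Pi.single_eq_same, Pi.single_eq_of_ne]
      · simp
      · simpa using hw
    obtain ⟨x, -, hx⟩ := Finset.exists_ne_zero_of_sum_ne_zero hb
    obtain ⟨l, h1, h2, h3, h4, h5⟩ := bx_walk m π hK _ hf v x (right_ne_zero_of_mul hx)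
    have h6 : π (FreeGroup.mk l) ≠ 1 := fun h => h1 (hK.nil h2 h3 h)
    have h7 : π (FreeGroup.mk l) = π w := by
      by_contra h7
      apply h5
      rw [bxBd_flow, Pi.sub_apply, Pi.single_eq_of_ne, Pi.single_eq_of_ne, sub_zero]
      · simpa using h7
      · simpa using h6
    refine ⟨FreeGroup.mk l, FreeGroup.norm_mk_le.trans h3, h7, ?_⟩
    have := bx_cycle_zero m π hK (bxFlow m π v (FreeGroup.mk l) - bxFlow m π v w) ?_ ?_
    · exact sub_eq_zero.mp this
    · refine le_trans (Set.ncard_le_ncard ?_ (Set.toFinite _)) hf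
      intro e he
      by_contra hne
      have hne' : bxFlow m π v w e = 0 := by simpa using hne
      apply he
      rw [Pi.sub_apply, hne', sub_zero, bxFlow_mk]
      exact bxChn_eq_zero _ _ _ _ _ (fun h => h4 e h hne')
    · rw [bxBd_sub, bxBd_flow, bxBd_flow, h7, sub_self]

/-- Flow vanishes on commutators and `m`-th powers of the kernel. -/
theorem bxFlow_eq_zero_of_mem (w : FreeGroup α)
    (hw : w ∈ ⁅π.ker, π.ker⁆ ⊔ Subgroup.closure {x | ∃ y ∈ π.ker, x = y ^ m}) (v : Q) :
    bxFlow m π v w = 0 := by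
  let φ : π.ker →* Multiplicative (Q × α → ZMod m) :=
    { toFun := fun w => Multiplicative.ofAdd (bxFlow m π v w)
      map_one' := by simp [bxFlow_one]
      map_mul' := by
        rintro ⟨x, hx⟩ ⟨y, hy⟩
        have hx' : π x = 1 := hx
        simp [bxFlow_mul, hx'] }
  have hle : ⁅π.ker, π.ker⁆ ⊔ Subgroup.closure {x | ∃ y ∈ π.ker, x = y ^ m} ≤
      φ.ker.map π.ker.subtype := by
    refine sup_le ?_ ?_
    · rw [Subgroup.commutator_le]
      intro x hx y hy
      refine ⟨(⟨x, hx⟩ : π.ker) * ⟨y, hy⟩ * ⟨x, hx⟩⁻¹ * ⟨y, hy⟩⁻¹, ?_, rfl⟩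
      change φ _ = 1
      rw [map_mul, map_mul, map_mul, map_inv, map_inv, mul_comm (φ ⟨x, hx⟩), mul_inv_cancel_right,
        mul_inv_cancel]
    · rw [Subgroup.closure_le]
      rintro _ ⟨y, hy, rfl⟩
      refine ⟨(⟨y, hy⟩ : π.ker) ^ m, ?_, rfl⟩
      change φ _ = 1
      rw [map_pow]
      apply Multiplicative.toAdd.injective
      rw [toAdd_pow, toAdd_one]
      funext e
      simp
  obtain ⟨⟨x, hx⟩, h1, rfl⟩ := hle hw
  exact Multiplicative.ofAdd.injective h1

/-- A closed path with zero flow lies in any normal subgroup containing the commutators and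
`m`-th powers of the kernel. -/
theorem bx_mem_of_flow [Finite Q] [Finite α] (hπ : Function.Surjective π)
    (M : Subgroup (FreeGroup α)) [M.Normal]
    (h1 : ⁅π.ker, π.ker⁆ ≤ M) (h2 : ∀ y ∈ π.ker, y ^ m ∈ M) (v : Q) (w : FreeGroup α)
    (hw : π w = 1) (hf : bxFlow m π v w = 0) : w ∈ M := by
  classical
  have := Fintype.ofFinite Q
  have := Fintype.ofFinite α
  let A := π.ker ⧸ (M.subgroupOf π.ker)
  let _ : CommGroup A :=
    { (inferInstance : Group A) with
      mul_comm := by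
        intro a b
        obtain ⟨x, rfl⟩ := QuotientGroup.mk_surjective a
        obtain ⟨y, rfl⟩ := QuotientGroup.mk_surjective b
        change (QuotientGroup.mk (x * y) : A) = QuotientGroup.mk (y * x)
        rw [QuotientGroup.eq]
        change ((x * y)⁻¹ * (y * x) : FreeGroup α) ∈ M
        have := h1 (Subgroup.commutator_mem_commutator (inv_mem y.2) (inv_mem x.2))
        simpa [commutatorElement_def, mul_assoc] using this }
  let _ : Module (ZMod m) (Additive A) := AddCommGroup.zmodModule (by
    intro x
    obtain ⟨y, hy⟩ := QuotientGroup.mk_surjective (Additive.toMul x)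
    apply Additive.toMul.injective
    rw [toMul_nsmul, ← hy]
    change (QuotientGroup.mk (y ^ m) : A) = QuotientGroup.mk 1
    rw [QuotientGroup.eq]
    change ((y ^ m)⁻¹ * 1 : FreeGroup α) ∈ M
    rw [mul_one]
    exact inv_mem (h2 y y.2))
  obtain ⟨t, ht⟩ := hπ.hasRightInverse
  -- class of a path
  let c : Q → FreeGroup α → Additive A := fun u w =>
    Additive.ofMul (QuotientGroup.mk ⟨t u * w * (t (u * π w))⁻¹, by
      rw [MonoidHom.mem_ker]; simp [ht _]⟩ : A)
  have hc : ∀ u w w', c u (w * w') = c u w + c (u * π w) w' := by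
    intro u w w'
    simp only [c]
    rw [← ofMul_mul, ← QuotientGroup.mk_mul]
    congr 2
    apply Subtype.ext
    simp [mul_assoc]
  have hc1 : ∀ u, c u 1 = 0 := by
    intro u
    have := hc u 1 1
    simpa using this
  let Φ : (Q × α → ZMod m) → Additive A := fun f => ∑ e, f e • c e.1 (FreeGroup.of e.2)
  have hΦ : ∀ f g, Φ (f + g) = Φ f + Φ g := by
    intro f g; simp [Φ, add_smul, Finset.sum_add_distrib]
  have hΦs : ∀ e z, Φ (Pi.single e z) = z • c e.1 (FreeGroup.of e.2) := by
    intro e z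
    simp only [Φ]
    rw [Finset.sum_eq_single e]
    · simp
    · intro b _ hb
      simp [Pi.single_eq_of_ne hb]
    · simp
  have key : ∀ (l : List (α × Bool)) (u : Q), Φ (bxChn m π u l) = c u (FreeGroup.mk l) := by
    intro l
    induction l with
    | nil => intro u; rw [← FreeGroup.one_eq_mk, hc1]; simp [bxChn, Φ]
    | cons x l ih =>
      intro u
      have h0 : FreeGroup.mk (x :: l) = FreeGroup.mk [x] * FreeGroup.mk l := by
        rw [FreeGroup.mul_mk]; rfl
      rw [bxChn, hΦ, ih, h0, hc, hΦs]
      congr 1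
      obtain ⟨a, b⟩ := x
      cases b
      · have h : FreeGroup.mk [(a, false)] = (FreeGroup.of a)⁻¹ := bx_mk_not a true
        simp only [bxSgn, bxEdge, h]
        have h3 := hc u (FreeGroup.of a)⁻¹ (FreeGroup.of a)
        rw [inv_mul_cancel, hc1] at h3
        simp only [Bool.false_eq_true, if_false, neg_smul, one_smul]
        rw [eq_comm, ← sub_eq_zero, sub_neg_eq_add, ← h3]
      · simp [bxSgn, bxEdge]; rfl
  obtain ⟨l, rfl⟩ := Quot.exists_rep w
  change π (FreeGroup.mk l) = 1 at hw
  change FreeGroup.mk l ∈ M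
  have h3 := key l v
  rw [show bxChn m π v l = 0 from hf] at h3
  have h4 : c v (FreeGroup.mk l) = 0 := by rw [← h3]; simp [Φ]
  have h5 := Additive.ofMul.injective h4
  rw [QuotientGroup.eq_one_iff] at h5
  change t v * FreeGroup.mk l * (t (v * π (FreeGroup.mk l)))⁻¹ ∈ M at h5
  rw [hw, mul_one] at h5
  have := Subgroup.Normal.conj_mem ‹M.Normal› _ h5 (t v)⁻¹
  simpa [mul_assoc] using this

end Chains
section Tree

variable {α : Type*} [DecidableEq α] {Q : Type*} [Group Q] (π : FreeGroup α →* Q)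

theorem bx_last_of_norm_le (u : FreeGroup α) (x : α × Bool)
    (h : (u * FreeGroup.mk [x]).norm ≤ u.norm) : (x.1, !x.2) ∈ u.toWord.getLast? := by
  by_contra hne
  have hred : FreeGroup.IsReduced (u.toWord ++ [x]) := by
    have h0 : FreeGroup.IsReduced u.toWord := FreeGroup.isReduced_toWord
    unfold FreeGroup.IsReduced at h0 ⊢
    rw [List.isChain_append]
    refine ⟨h0, List.isChain_singleton _, ?_⟩
    intro a ha b hb hab
    simp only [List.head?_cons, Option.mem_def, Option.some.injEq] at hb
    subst hb
    by_contra h2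
    apply hne
    have : a = (x.1, !x.2) := by
      refine Prod.ext_iff.mpr ⟨hab, ?_⟩
      cases h3 : a.2 <;> cases h4 : x.2 <;> simp_all
    rw [← this]; exact ha
  have h2 : (u * FreeGroup.mk [x]).toWord = u.toWord ++ [x] := by
    conv_lhs => rw [← FreeGroup.mk_toWord (x := u)]
    rw [FreeGroup.mul_mk, FreeGroup.toWord_mk, hred.reduce_eq]
  unfold FreeGroup.norm at h
  rw [h2] at h
  simp at h

theorem bx_letter_unique (u : FreeGroup α) (x y : α × Bool)
    (hx : (u * FreeGroup.mk [x]).norm ≤ u.norm) (hy : (u * FreeGroup.mk [y]).norm ≤ u.norm) :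
    x = y := by
  have h := Option.mem_unique (bx_last_of_norm_le u x hx) (bx_last_of_norm_le u y hy)
  have h1 := congrArg Prod.fst h
  have h2 := congrArg Prod.snd h
  exact Prod.ext_iff.mpr ⟨h1, by simpa using h2⟩

variable {π} in
theorem BxGirth.inj {K : ℕ} (hK : BxGirth π K) {w w' : FreeGroup α} (h : π w = π w')
    (hn : w.norm + w'.norm ≤ K) : w = w' := by
  by_contra hne
  have h1 := hK (w⁻¹ * w') (by rw [map_mul, map_inv, h, inv_mul_cancel])
    (fun h2 => hne (inv_mul_eq_one.mp h2))
  have h2 := FreeGroup.norm_mul_le w⁻¹ w'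
  rw [FreeGroup.norm_inv_eq] at h2
  omega

theorem bx_theta (x a b : ℝ) (h : (a = 2 ∧ b = 1/2) ∨ (a = 1 ∧ b = 1) ∨ (a = 1/2 ∧ b = 2)) (y : ℝ) :
    x * y ≤ (1/2) * (a * x ^ 2 + b * y ^ 2) := by
  rcases h with ⟨rfl, rfl⟩ | ⟨rfl, rfl⟩ | ⟨rfl, rfl⟩
  · nlinarith [sq_nonneg (2 * x - y)]
  · nlinarith [sq_nonneg (x - y)]
  · nlinarith [sq_nonneg (x - 2 * y)]

theorem bx_tree_ineq [Fintype α] [Fintype Q] (hπ : Function.Surjective π) {S : ℕ}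
    (hK : BxGirth π (2 * S + 1)) (y : Q) (h : Q → ℝ)
    (hh : ∀ x, h x ≠ 0 → ∃ w : FreeGroup α, w.norm ≤ S ∧ x = y * π w) :
    ∑ x, ∑ l : α × Bool, h x * h (x * π (FreeGroup.mk [l])) ≤
      (Fintype.card α + 3/2) * ∑ x, h x ^ 2 := by
  classical
  have hex : ∀ x, ∃ k, ∃ w : FreeGroup α, w.norm = k ∧ x = y * π w := by
    intro x
    obtain ⟨w, hw⟩ := hπ (y⁻¹ * x)
    exact ⟨_, w, rfl, by rw [hw, mul_inv_cancel_left]⟩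
  let r : Q → ℕ := fun x => Nat.find (hex x)
  have hr1 : ∀ x, ∃ w : FreeGroup α, w.norm = r x ∧ x = y * π w := fun x => Nat.find_spec (hex x)
  have hr2 : ∀ x (w : FreeGroup α), x = y * π w → r x ≤ w.norm :=
    fun x w hw => Nat.find_min' (hex x) ⟨w, rfl, hw⟩
  let θ : Q → Q → ℝ := fun x x' => if r x' < r x then 2 else if r x' = r x then 1 else 1/2
  have hθ : ∀ x x', (θ x x' = 2 ∧ θ x' x = 1/2) ∨ (θ x x' = 1 ∧ θ x' x = 1) ∨
      (θ x x' = 1/2 ∧ θ x' x = 2) := by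
    intro x x'
    simp only [θ]
    rcases lt_trichotomy (r x) (r x') with h1 | h1 | h1
    · right; right; simp [h1, h1.not_gt, h1.ne']
    · right; left; simp [h1]
    · left; simp [h1, h1.not_gt, h1.ne']
  let σ : Q × (α × Bool) → Q × (α × Bool) :=
    fun p => (p.1 * π (FreeGroup.mk [p.2]), (p.2.1, !p.2.2))
  have hσ : Function.Involutive σ := by
    rintro ⟨x, a, b⟩
    simp only [σ]
    rw [bx_mk_not, map_inv, mul_inv_cancel_right, Bool.not_not]
  have hsum : ∀ x, h x ≠ 0 →
      ∑ l : α × Bool, θ x (x * π (FreeGroup.mk [l])) ≤ Fintype.card α + 3/2 := by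
    intro x hx
    obtain ⟨w, hw, hxw⟩ := hh x hx
    obtain ⟨u, hu, hxu⟩ := hr1 x
    have hS : u.norm ≤ S := by rw [hu]; exact (hr2 x w hxw).trans hw
    have huniq : ∀ l : α × Bool, r (x * π (FreeGroup.mk [l])) ≤ r x →
        (u * FreeGroup.mk [l]).norm ≤ u.norm := by
      intro l hl
      obtain ⟨w', hw', hxw'⟩ := hr1 (x * π (FreeGroup.mk [l]))
      have h1 : π w' = π (u * FreeGroup.mk [l]) := by
        rw [hxu, mul_assoc, mul_right_inj] at hxw'
        rw [map_mul, ← hxw']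
      have h2 := FreeGroup.norm_mul_le u (FreeGroup.mk [l])
      have h3 := FreeGroup.norm_mk_le (L₁ := [l])
      simp only [List.length_singleton] at h3
      have h4 := hK.inj h1 (by omega)
      rw [← h4]; omega
    have hcard : ∑ _l : α × Bool, (1/2 : ℝ) = Fintype.card α := by
      simp [Fintype.card_prod]
    by_cases hl0 : ∃ l0 : α × Bool, r (x * π (FreeGroup.mk [l0])) ≤ r x
    · obtain ⟨l0, hl0⟩ := hl0
      have hle : ∀ l : α × Bool, θ x (x * π (FreeGroup.mk [l])) ≤
          1/2 + (if l = l0 then 3/2 else 0) := by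
        intro l
        by_cases hl : r (x * π (FreeGroup.mk [l])) ≤ r x
        · rw [if_pos (bx_letter_unique u l l0 (huniq l hl) (huniq l0 hl0))]
          simp only [θ]
          split_ifs <;> norm_num
        · have h1 : θ x (x * π (FreeGroup.mk [l])) = 1/2 := by
            simp only [θ]
            rw [if_neg (by omega), if_neg (by omega)]
          rw [h1]
          split_ifs <;> norm_num
      refine (Finset.sum_le_sum fun l _ => hle l).trans ?_
      rw [Finset.sum_add_distrib, hcard]
      simp
    · push Not at hl0
      have hle : ∀ l : α × Bool, θ x (x * π (FreeGroup.mk [l])) = 1/2 := by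
        intro l
        have := hl0 l
        simp only [θ]
        rw [if_neg (by omega), if_neg (by omega)]
      rw [Finset.sum_congr rfl fun l _ => hle l, hcard]
      norm_num
  let g : Q × (α × Bool) → ℝ := fun p => θ p.1 (p.1 * π (FreeGroup.mk [p.2])) * h p.1 ^ 2
  have hgσ : ∀ p : Q × (α × Bool), g (σ p) =
      θ (p.1 * π (FreeGroup.mk [p.2])) p.1 * h (p.1 * π (FreeGroup.mk [p.2])) ^ 2 := by
    intro p
    have := congrArg Prod.fst (hσ p)
    simp only [g]
    have h2 : (σ p).1 * π (FreeGroup.mk [(σ p).2]) = p.1 := this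
    rw [h2]
  calc ∑ x, ∑ l : α × Bool, h x * h (x * π (FreeGroup.mk [l]))
      = ∑ p : Q × (α × Bool), h p.1 * h (p.1 * π (FreeGroup.mk [p.2])) := by
        rw [Fintype.sum_prod_type]
    _ ≤ ∑ p : Q × (α × Bool), (1/2) * (g p + g (σ p)) := by
        refine Finset.sum_le_sum fun p _ => ?_
        rw [hgσ]
        exact bx_theta _ _ _ (hθ _ _) _
    _ = ∑ p : Q × (α × Bool), g p := by
        rw [← Finset.mul_sum, Finset.sum_add_distrib]
        have := Equiv.sum_comp hσ.toPerm g
        simp only [Function.Involutive.coe_toPerm] at this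
        rw [this]; ring
    _ = ∑ x, (∑ l : α × Bool, θ x (x * π (FreeGroup.mk [l]))) * h x ^ 2 := by
        rw [Fintype.sum_prod_type]
        refine Finset.sum_congr rfl fun x _ => ?_
        rw [Finset.sum_mul]
    _ ≤ ∑ x, (Fintype.card α + 3/2) * h x ^ 2 := by
        refine Finset.sum_le_sum fun x _ => ?_
        by_cases hx : h x = 0
        · simp [hx]
        · exact mul_le_mul_of_nonneg_right (hsum x hx) (sq_nonneg _)
    _ = _ := by rw [Finset.mul_sum]

theorem bx_no_A [Fintype α] [Fintype Q] (hπ : Function.Surjective π) {S : ℕ}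
    (hK : BxGirth π (2 * S + 1)) (φ : Q → Q → ℝ)
    (hφ : ∀ x y, φ x y ≠ 0 → ∃ w : FreeGroup α, w.norm ≤ S ∧ y = x * π w)
    (h1 : ∀ x, ∑ y, φ x y * φ x y = 1) (ε : ℝ)
    (h2 : ∀ x (l : α × Bool), 1 - ε ≤ ∑ y, φ x y * φ (x * π (FreeGroup.mk [l])) y) :
    2 * Fintype.card α * (1 - ε) ≤ Fintype.card α + 3/2 := by
  have hpos : (0 : ℝ) < Fintype.card Q := by exact_mod_cast Fintype.card_pos
  refine le_of_mul_le_mul_left ?_ hpos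
  calc (Fintype.card Q : ℝ) * (2 * Fintype.card α * (1 - ε))
      = ∑ _x : Q, ∑ _l : α × Bool, (1 - ε) := by
        simp [Fintype.card_prod]; ring
    _ ≤ ∑ x : Q, ∑ l : α × Bool, ∑ y, φ x y * φ (x * π (FreeGroup.mk [l])) y :=
        Finset.sum_le_sum fun x _ => Finset.sum_le_sum fun l _ => h2 x l
    _ = ∑ y, ∑ x : Q, ∑ l : α × Bool, φ x y * φ (x * π (FreeGroup.mk [l])) y :=
        (Finset.sum_congr rfl fun x _ => Finset.sum_comm).trans Finset.sum_comm
    _ ≤ ∑ y, (Fintype.card α + 3/2) * ∑ x, φ x y ^ 2 := by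
        refine Finset.sum_le_sum fun y _ => ?_
        refine bx_tree_ineq π hπ hK y (fun x => φ x y) ?_
        intro x hx
        obtain ⟨w, hw, hy⟩ := hφ x y hx
        exact ⟨w⁻¹, by rwa [FreeGroup.norm_inv_eq], by rw [hy, map_inv, mul_inv_cancel_right]⟩
    _ = (Fintype.card α + 3/2) * ∑ x, ∑ y, φ x y * φ x y := by
        rw [← Finset.mul_sum, Finset.sum_comm]
        simp [pow_two]
    _ = _ := by
        simp only [h1]
        simp
        ring

end Tree
section Coarse

theorem bx_hilbert : ∃ V : Finset ℕ → lp (fun _ : ℕ => ℝ) 2,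
    ∀ A B, dist (V A) (V B) = Real.sqrt ((symmDiff A B).card) := by
  classical
  refine ⟨fun A => ∑ a ∈ A, lp.single 2 a (1 : ℝ), fun A B => ?_⟩
  have hV : ∀ (A : Finset ℕ) (k : ℕ),
      ((∑ a ∈ A, lp.single 2 a (1 : ℝ) : lp (fun _ : ℕ => ℝ) 2) : ℕ → ℝ) k =
        if k ∈ A then 1 else 0 := by
    intro A k
    rw [lp.coeFn_sum, Finset.sum_apply]
    simp [lp.single_apply, Pi.single_apply]
  rw [dist_eq_norm]
  symm
  rw [Real.sqrt_eq_iff_mul_self_eq (by positivity) (norm_nonneg _)]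
  rw [← real_inner_self_eq_norm_mul_norm, lp.inner_eq_tsum]
  rw [tsum_eq_sum (s := symmDiff A B)]
  · rw [Finset.card_eq_sum_ones, Nat.cast_sum]
    refine Finset.sum_congr rfl fun k hk => ?_
    rw [lp.coeFn_sub, Pi.sub_apply, hV, hV]
    rw [Finset.mem_symmDiff] at hk
    rcases hk with ⟨h1, h2⟩ | ⟨h1, h2⟩ <;> simp [h1, h2]
  · intro k hk
    rw [lp.coeFn_sub, Pi.sub_apply, hV, hV]
    rw [Finset.mem_symmDiff] at hk
    by_cases h1 : k ∈ A <;> by_cases h2 : k ∈ B <;> simp_all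

theorem bx_coarse {X Y : Type*} (D : X → X → ℝ) (dY : Y → Y → ℝ) (F : X → Y)
    (hD : ∀ x y, 0 ≤ D x y) (h0 : ∀ x y, 0 ≤ dY (F x) (F y))
    (h1 : ∀ R : ℕ, ∃ C : ℝ, ∀ x y, D x y ≤ R → dY (F x) (F y) ≤ C)
    (h2 : ∀ C : ℕ, ∃ R : ℝ, ∀ x y, dY (F x) (F y) ≤ C → D x y ≤ R) :
    CoarseEmbeddingWith D dY F := by
  choose c hc using h1
  choose r hr using h2
  let r' : ℕ → ℝ := fun k => k + ∑ j ∈ Finset.range (k + 1), |r j|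
  have hr' : ∀ k, r k ≤ r' k := by
    intro k
    have h3 : |r k| ≤ ∑ j ∈ Finset.range (k + 1), |r j| :=
      Finset.single_le_sum (f := fun j => |r j|) (fun _ _ => abs_nonneg _) (by simp)
    have := le_abs_self (r k)
    have h4 : (0 : ℝ) ≤ k := by positivity
    simp only [r']; linarith
  have hk : ∀ k : ℕ, (k : ℝ) ≤ r' k := by
    intro k
    have : 0 ≤ ∑ j ∈ Finset.range (k + 1), |r j| := Finset.sum_nonneg fun _ _ => abs_nonneg _
    simp only [r']; linarith
  have hfin : ∀ t : ℝ, {k : ℕ | r' k < t}.Finite := by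
    intro t
    refine (Set.finite_lt_nat (⌈t⌉₊)).subset ?_
    intro k hk'
    have : (k : ℝ) < t := (hk k).trans_lt hk'
    exact Nat.lt_ceil.mpr this
  refine ⟨fun t => ({k : ℕ | r' k < t}.ncard : ℝ) - 1,
    fun t => t + ∑ k ∈ Finset.range (⌈t⌉₊ + 1), |c k|, ?_, ?_, ?_, ?_, ?_⟩
  · intro s t hst
    have : {k : ℕ | r' k < s}.ncard ≤ {k : ℕ | r' k < t}.ncard :=
      Set.ncard_le_ncard (fun k hk' => lt_of_lt_of_le hk' hst) (hfin t)
    have h3 : (({k : ℕ | r' k < s}.ncard : ℕ) : ℝ) ≤ ({k : ℕ | r' k < t}.ncard : ℕ) := by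
      exact_mod_cast this
    simpa using h3
  · intro s t hst
    have : ∑ k ∈ Finset.range (⌈s⌉₊ + 1), |c k| ≤ ∑ k ∈ Finset.range (⌈t⌉₊ + 1), |c k| := by
      refine Finset.sum_le_sum_of_subset_of_nonneg ?_ fun _ _ _ => abs_nonneg _
      exact Finset.range_mono (by have := Nat.ceil_mono hst; omega)
    simp only; linarith
  · rw [tendsto_atTop]
    intro b
    let M := ⌈b⌉₊ + 1
    filter_upwards [eventually_gt_atTop (∑ k ∈ Finset.range M, |r' k|)] with t ht
    have : M ≤ {k : ℕ | r' k < t}.ncard := by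
      have h3 : ((Finset.range M : Finset ℕ) : Set ℕ) ⊆ {k : ℕ | r' k < t} := by
        intro k hk'
        have h4 : |r' k| ≤ ∑ k ∈ Finset.range M, |r' k| :=
          Finset.single_le_sum (f := fun j => |r' j|) (fun _ _ => abs_nonneg _) hk'
        exact ((le_abs_self _).trans h4).trans_lt ht
      have := Set.ncard_le_ncard h3 (hfin t)
      rwa [Set.ncard_coe_finset, Finset.card_range] at this
    have h3 : (M : ℝ) ≤ ({k : ℕ | r' k < t}.ncard : ℕ) := by exact_mod_cast this
    have h4 := Nat.le_ceil b
    simp only [M, Nat.cast_add, Nat.cast_one] at h3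
    linarith
  · refine tendsto_atTop_mono (fun t => ?_) tendsto_id
    have : 0 ≤ ∑ k ∈ Finset.range (⌈t⌉₊ + 1), |c k| := Finset.sum_nonneg fun _ _ => abs_nonneg _
    simp only [id]; linarith
  · intro x y
    constructor
    · have h3 : {k : ℕ | r' k < D x y} ⊆ ((Finset.range ⌈dY (F x) (F y)⌉₊ : Finset ℕ) : Set ℕ) := by
        intro k hk'
        simp only [Finset.coe_range, Set.mem_Iio]
        rw [Nat.lt_ceil]
        by_contra h4
        have h5 := hr k x y (not_lt.mp h4)
        have h6 : r' k < D x y := hk'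
        linarith [hr' k]
      have := Set.ncard_le_ncard h3 (Finset.finite_toSet _)
      rw [Set.ncard_coe_finset, Finset.card_range] at this
      have h4 : (({k : ℕ | r' k < D x y}.ncard : ℕ) : ℝ) ≤ ⌈dY (F x) (F y)⌉₊ := by
        exact_mod_cast this
      have := Nat.ceil_lt_add_one (h0 x y)
      linarith
    · have h3 := hc ⌈D x y⌉₊ x y (Nat.le_ceil _)
      have h4 : |c ⌈D x y⌉₊| ≤ ∑ k ∈ Finset.range (⌈D x y⌉₊ + 1), |c k| :=
        Finset.single_le_sum (f := fun j => |c j|) (fun _ _ => abs_nonneg _) (by simp)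
      have := le_abs_self (c ⌈D x y⌉₊)
      linarith [hD x y]

end Coarse
section Series

theorem bx_normal (G : Type*) [Group G] (m i : ℕ) : (derivedMSeries G m i).Normal := by
  induction i with
  | zero => exact (inferInstance : (⊤ : Subgroup G).Normal)
  | succ i ih =>
    have h1 : (Subgroup.closure {x : G | ∃ y ∈ derivedMSeries G m i, x = y ^ m}).Normal := by
      have h2 : {x : G | ∃ y ∈ derivedMSeries G m i, x = y ^ m} =
          Group.conjugatesOfSet {x : G | ∃ y ∈ derivedMSeries G m i, x = y ^ m} := by
        apply Set.Subset.antisymm Group.subset_conjugatesOfSet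
        intro x hx
        obtain ⟨_, ⟨y, hy, rfl⟩, hc⟩ := Group.mem_conjugatesOfSet_iff.mp hx
        obtain ⟨c, rfl⟩ := isConj_iff.mp hc
        exact ⟨c * y * c⁻¹, ih.conj_mem y hy c, by rw [conj_pow]⟩
      rw [h2]
      exact Subgroup.normalClosure_normal
    exact Subgroup.sup_normal _ _

instance bx_normal_inst (n m i : ℕ) : (derivedMSeries (FreeGroup (Fin n)) m i).Normal :=
  bx_normal _ m i

variable {n m : ℕ}

/-- The quotient map. -/
abbrev bxPi (n m i : ℕ) : FreeGroup (Fin n) →*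
    FreeGroup (Fin n) ⧸ derivedMSeries (FreeGroup (Fin n)) m i :=
  QuotientGroup.mk' (derivedMSeries (FreeGroup (Fin n)) m i)

theorem bxPi_surj (n m i : ℕ) : Function.Surjective (bxPi n m i) :=
  QuotientGroup.mk'_surjective _

theorem bxPi_eq_one (i : ℕ) (w : FreeGroup (Fin n)) :
    bxPi n m i w = 1 ↔ w ∈ derivedMSeries (FreeGroup (Fin n)) m i :=
  QuotientGroup.eq_one_iff w

theorem bx_succ_le (i : ℕ) : derivedMSeries (FreeGroup (Fin n)) m (i + 1) ≤
    derivedMSeries (FreeGroup (Fin n)) m i := by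
  refine sup_le (Subgroup.commutator_le_self _) ?_
  rw [Subgroup.closure_le]
  rintro _ ⟨y, hy, rfl⟩
  exact pow_mem hy m

theorem bxFlow_succ (i : ℕ) (w : FreeGroup (Fin n))
    (hw : w ∈ derivedMSeries (FreeGroup (Fin n)) m (i + 1)) (v) :
    bxFlow m (bxPi n m i) v w = 0 := by
  apply bxFlow_eq_zero_of_mem
  rw [QuotientGroup.ker_mk']
  exact hw

theorem bx_girth (hm : 2 ≤ m) (i : ℕ) : BxGirth (bxPi n m i) i := by
  induction i with
  | zero =>
    intro w _ hw
    exact Nat.pos_of_ne_zero (fun h => hw (FreeGroup.norm_eq_zero.mp h))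
  | succ i ih =>
    intro w hw hne
    by_contra hcon
    rw [bxPi_eq_one] at hw
    exact bxFlow_ne_zero m (bxPi n m i) hm ih 1 w hne (by omega) (bxFlow_succ i w hw 1)

theorem bx_girth_le (hm : 2 ≤ m) {i K : ℕ} (h : K ≤ i) : BxGirth (bxPi n m i) K :=
  fun w h1 h2 => h.trans_lt (bx_girth hm i w h1 h2)

theorem bx_mem_succ (i : ℕ) [Finite (FreeGroup (Fin n) ⧸ derivedMSeries (FreeGroup (Fin n)) m i)]
    (v) (w : FreeGroup (Fin n)) (hw : bxPi n m i w = 1) (hf : bxFlow m (bxPi n m i) v w = 0) :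
    w ∈ derivedMSeries (FreeGroup (Fin n)) m (i + 1) := by
  refine bx_mem_of_flow m (bxPi n m i) (bxPi_surj n m i) _ ?_ ?_ v w hw hf
  · rw [QuotientGroup.ker_mk']
    exact le_sup_left
  · intro y hy
    rw [QuotientGroup.ker_mk'] at hy
    exact (le_sup_right : _ ≤ derivedMSeries (FreeGroup (Fin n)) m (i + 1))
      (Subgroup.subset_closure ⟨y, hy, rfl⟩)

theorem bx_mem_succ_of_eq (i : ℕ)
    [Finite (FreeGroup (Fin n) ⧸ derivedMSeries (FreeGroup (Fin n)) m i)]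
    (v) (u w : FreeGroup (Fin n)) (hw : bxPi n m i u = bxPi n m i w)
    (hf : bxFlow m (bxPi n m i) v u = bxFlow m (bxPi n m i) v w) :
    bxPi n m (i + 1) u = bxPi n m (i + 1) w := by
  refine QuotientGroup.eq.mpr (bx_mem_succ i (v * bxPi n m i u) _ ?_ ?_)
  · rw [map_mul, map_inv, hw, inv_mul_cancel]
  · have := bxFlow_mul m (bxPi n m i) v u (u⁻¹ * w)
    rw [mul_inv_cancel_left, hf] at this
    simpa using this

theorem bx_finite (hm : 2 ≤ m) (i : ℕ) :
    Finite (FreeGroup (Fin n) ⧸ derivedMSeries (FreeGroup (Fin n)) m i) := by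
  have : NeZero m := ⟨by omega⟩
  induction i with
  | zero =>
    have : Subsingleton (FreeGroup (Fin n) ⧸ derivedMSeries (FreeGroup (Fin n)) m 0) :=
      QuotientGroup.subsingleton_quotient_top
    infer_instance
  | succ i ih =>
    obtain ⟨t, ht⟩ := (bxPi_surj n m (i + 1)).hasRightInverse
    refine Finite.of_injective (fun x => (bxPi n m i (t x), bxFlow m (bxPi n m i) 1 (t x))) ?_
    intro x y hxy
    rw [← ht x, ← ht y]
    exact bx_mem_succ_of_eq i 1 _ _ (congrArg Prod.fst hxy) (congrArg Prod.snd hxy)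

/-- Word distance in the `i`-th quotient. -/
noncomputable abbrev bxD (n m i : ℕ)
    (x y : FreeGroup (Fin n) ⧸ derivedMSeries (FreeGroup (Fin n)) m i) : ℕ :=
  quotWordDist (Set.range (FreeGroup.of : Fin n → FreeGroup (Fin n)))
        (derivedMSeries (FreeGroup (Fin n)) m i) x y

theorem bx_prod_letters (w : List (Fin n × Bool)) :
    (w.map fun x => FreeGroup.mk [x]).prod = FreeGroup.mk w := by
  induction w with
  | nil => rfl
  | cons x l ih => rw [List.map_cons, List.prod_cons, ih, FreeGroup.mul_mk]; rfl

theorem bxD_le (i : ℕ) (x) (w : FreeGroup (Fin n)) :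
    bxD n m i x (x * bxPi n m i w) ≤ w.norm := by
  obtain ⟨g, rfl⟩ := bxPi_surj n m i x
  refine Nat.sInf_le ⟨g, w.toWord.map fun x => FreeGroup.mk [x], ?_, rfl, ?_, ?_⟩
  · intro a ha
    obtain ⟨⟨a, b⟩, -, rfl⟩ := List.mem_map.mp ha
    cases b
    · right
      exact ⟨a, by rw [← bx_mk_not]; rfl⟩
    · left
      exact ⟨a, rfl⟩
  · rw [bx_prod_letters, FreeGroup.mk_toWord]; rfl
  · rw [List.length_map]; rfl

theorem bx_norm_prod (l : List (FreeGroup (Fin n)))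
    (hl : ∀ a ∈ l, a ∈ Set.range (FreeGroup.of : Fin n → FreeGroup (Fin n)) ∨
      a⁻¹ ∈ Set.range (FreeGroup.of : Fin n → FreeGroup (Fin n))) :
    l.prod.norm ≤ l.length := by
  induction l with
  | nil => simp
  | cons a l ih =>
    rw [List.prod_cons, List.length_cons]
    have h1 := FreeGroup.norm_mul_le a l.prod
    have h2 := ih (fun b hb => hl b (List.mem_cons_of_mem _ hb))
    have h3 : a.norm = 1 := by
      rcases hl a List.mem_cons_self with ⟨b, rfl⟩ | ⟨b, hb⟩
      · exact FreeGroup.norm_of b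
      · rw [← FreeGroup.norm_inv_eq, ← hb]; exact FreeGroup.norm_of b
    omega

theorem bxD_spec (i : ℕ) (x y) :
    ∃ w : FreeGroup (Fin n), w.norm ≤ bxD n m i x y ∧ y = x * bxPi n m i w := by
  have hne : {k | ∃ (g : FreeGroup (Fin n)) (l : List (FreeGroup (Fin n))),
      (∀ a ∈ l, a ∈ Set.range (FreeGroup.of : Fin n → FreeGroup (Fin n)) ∨
        a⁻¹ ∈ Set.range (FreeGroup.of : Fin n → FreeGroup (Fin n))) ∧
      (QuotientGroup.mk g : FreeGroup (Fin n) ⧸ derivedMSeries (FreeGroup (Fin n)) m i) = x ∧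
      (QuotientGroup.mk (g * l.prod) :
        FreeGroup (Fin n) ⧸ derivedMSeries (FreeGroup (Fin n)) m i) = y ∧
      l.length = k}.Nonempty := by
    obtain ⟨g, rfl⟩ := bxPi_surj n m i x
    obtain ⟨g', rfl⟩ := bxPi_surj n m i y
    refine ⟨_, g, (g⁻¹ * g').toWord.map fun x => FreeGroup.mk [x], ?_, rfl, ?_, rfl⟩
    · intro a ha
      obtain ⟨⟨a, b⟩, -, rfl⟩ := List.mem_map.mp ha
      cases b
      · right
        exact ⟨a, by rw [← bx_mk_not]; rfl⟩
      · left
        exact ⟨a, rfl⟩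
    · rw [bx_prod_letters, FreeGroup.mk_toWord, mul_inv_cancel_left]; rfl
  obtain ⟨g, l, h1, rfl, rfl, h4⟩ := Nat.sInf_mem hne
  refine ⟨l.prod, (bx_norm_prod l h1).trans (le_of_eq h4), rfl⟩

theorem bx_pow_dist (hm : 2 ≤ m) (a : Fin n) (i k : ℕ) (hk : 2 * k ≤ i) :
    k ≤ bxD n m i 1 (bxPi n m i (FreeGroup.of a ^ k)) := by
  by_contra hcon
  obtain ⟨w, h1, h2⟩ := bxD_spec (m := m) i 1 (bxPi n m i (FreeGroup.of a ^ k))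
  rw [one_mul] at h2
  have h3 := (bx_girth hm i).inj h2 (by rw [FreeGroup.norm_of_pow]; omega)
  rw [← h3, FreeGroup.norm_of_pow] at h1
  omega

theorem bx_diam (hn : 2 ≤ n) (hm : 2 ≤ m) (i : ℕ) :
    ((i / 2 : ℕ) : ℝ) ≤ spaceDiam (fun x y => (bxD n m i x y : ℝ)) := by
  have := bx_finite (n := n) hm i
  have h1 := bx_pow_dist hm (⟨0, by omega⟩ : Fin n) i (i / 2) (by omega)
  refine le_trans (Nat.cast_le.mpr h1) ?_
  refine le_csSup (Set.finite_range _).bddAbove ?_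
  exact ⟨(_, _), rfl⟩

theorem bx_card (hn : 2 ≤ n) (hm : 2 ≤ m) (i : ℕ) :
    i / 2 ≤ Nat.card (FreeGroup (Fin n) ⧸ derivedMSeries (FreeGroup (Fin n)) m i) := by
  have := bx_finite (n := n) hm i
  have h1 : Function.Injective (fun k : Fin (i / 2) =>
      bxPi n m i (FreeGroup.of (⟨0, by omega⟩ : Fin n) ^ (k : ℕ))) := by
    intro k l hkl
    have h2 := (bx_girth hm i).inj hkl (by
      rw [FreeGroup.norm_of_pow, FreeGroup.norm_of_pow]
      have := k.2
      have := l.2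
      omega)
    have h3 := congrArg FreeGroup.norm h2
    rw [FreeGroup.norm_of_pow, FreeGroup.norm_of_pow] at h3
    exact Fin.ext h3
  simpa using Nat.card_le_card_of_injective _ h1

end Series
section Final

/-- The underlying set of the box space. -/
abbrev BxX (n m : ℕ) : Type :=
  Σ i : ℕ, FreeGroup (Fin n) ⧸ derivedMSeries (FreeGroup (Fin n)) m i

theorem bx_finite_lt {n m : ℕ} (hm : 2 ≤ m) (J : ℕ) : {x : BxX n m | x.1 < J}.Finite := by
  have : ∀ i, Finite (FreeGroup (Fin n) ⧸ derivedMSeries (FreeGroup (Fin n)) m i) := bx_finite hm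
  have h : {x : BxX n m | x.1 < J} ⊆
      ⋃ i ∈ Finset.range J, Set.range (fun y => (⟨i, y⟩ : BxX n m)) := by
    rintro ⟨i, y⟩ hi
    simp only [Set.mem_iUnion]
    exact ⟨i, by simpa using hi, y, rfl⟩
  refine Set.Finite.subset ?_ h
  exact (Finset.range J).finite_toSet.biUnion fun i _ => Set.finite_range _

theorem bx_bdd_lt {n m : ℕ} (hm : 2 ≤ m) (J : ℕ) (f : BxX n m → BxX n m → ℝ) :
    ∃ C, ∀ x y, x.1 < J → y.1 < J → f x y ≤ C := by
  have h := (bx_finite_lt (n := n) hm J).prod (bx_finite_lt (n := n) hm J)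
  obtain ⟨C, hC⟩ := (h.image (fun p => f p.1 p.2)).bddAbove
  exact ⟨C, fun x y hx hy => hC ⟨(x, y), ⟨hx, hy⟩, rfl⟩⟩

theorem bx_ball_finite (n k : ℕ) : {w : FreeGroup (Fin n) | w.norm ≤ k}.Finite := by
  have h := List.finite_length_le (Fin n × Bool) k
  exact h.preimage (FreeGroup.toWord_injective.injOn)

theorem bx_cross {n m : ℕ} (hn : 2 ≤ n) (hm : 2 ≤ m) (D : BxX n m → BxX n m → ℝ)
    (hbox : IsCoarseDisjointUnionOf (fun i x y => (bxD n m i x y : ℝ)) D) {x y : BxX n m} (hxy : x.1 ≠ y.1) {R : ℕ} (hR : D x y ≤ R) :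
    x.1 < 2 * R ∧ y.1 < 2 * R := by
  obtain ⟨i, x⟩ := x
  obtain ⟨j, y⟩ := y
  have h1 := hbox.2 i j hxy x y
  have h2 := bx_diam hn hm i
  have h3 := bx_diam hn hm j
  rw [max_lt_iff] at h1
  have h4 : ((i / 2 : ℕ) : ℝ) < R := (h2.trans_lt h1.1).trans_le hR
  have h5 : ((j / 2 : ℕ) : ℝ) < R := (h3.trans_lt h1.2).trans_le hR
  rw [Nat.cast_lt] at h4 h5
  simp only
  omega

theorem bx_same {n m : ℕ} (D : BxX n m → BxX n m → ℝ)
    (hbox : IsCoarseDisjointUnionOf (fun i x y => (bxD n m i x y : ℝ)) D) {i : ℕ} {x y} {R : ℕ} (hR : D ⟨i, x⟩ ⟨i, y⟩ ≤ R) :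
    ∃ w : FreeGroup (Fin n), w.norm ≤ R ∧ y = x * bxPi n m i w := by
  rw [hbox.1] at hR
  beta_reduce at hR
  obtain ⟨w, h1, h2⟩ := bxD_spec i x y
  exact ⟨w, h1.trans (by exact_mod_cast hR), h2⟩

theorem bx_bounded {n m : ℕ} (hn : 2 ≤ n) (hm : 2 ≤ m) (D : BxX n m → BxX n m → ℝ)
    (hbox : IsCoarseDisjointUnionOf (fun i x y => (bxD n m i x y : ℝ)) D) : BoundedGeometry D := by
  intro R
  let k := ⌈R⌉₊
  refine ⟨{x : BxX n m | x.1 < 2 * k}.ncard + {w : FreeGroup (Fin n) | w.norm ≤ k}.ncard, ?_⟩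
  rintro ⟨i, x⟩
  rw [Nat.card_coe_set_eq]
  have hsub : {y | D ⟨i, x⟩ y ≤ R} ⊆ {x : BxX n m | x.1 < 2 * k} ∪
      (fun w => (⟨i, x * bxPi n m i w⟩ : BxX n m)) '' {w : FreeGroup (Fin n) | w.norm ≤ k} := by
    rintro ⟨j, y⟩ hy
    have hy' : D ⟨i, x⟩ ⟨j, y⟩ ≤ k := le_trans hy (Nat.le_ceil R)
    by_cases hij : i = j
    · subst hij
      obtain ⟨w, h1, rfl⟩ := bx_same D hbox hy'
      exact Or.inr ⟨w, h1, rfl⟩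
    · exact Or.inl (bx_cross hn hm D hbox (x := ⟨i, x⟩) (y := ⟨j, y⟩) hij hy').2
  refine (Set.ncard_le_ncard hsub
    ((bx_finite_lt hm _).union ((bx_ball_finite n k).image _))).trans ?_
  refine (Set.ncard_union_le _ _).trans ?_
  exact Nat.add_le_add_left (Set.ncard_image_le (bx_ball_finite n k)) _

theorem bx_not_A {n m : ℕ} (hn : 2 ≤ n) (hm : 2 ≤ m) (D : BxX n m → BxX n m → ℝ)
    (hbox : IsCoarseDisjointUnionOf (fun i x y => (bxD n m i x y : ℝ)) D) : ¬ HasPropertyA D := by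
  intro hA
  obtain ⟨S, hS, φ, hf, h1, h2, h3⟩ := hA 1 one_pos (1/16) (by norm_num)
  let k := ⌈S⌉₊
  let i := 2 * k + 2
  have := bx_finite (n := n) hm i
  let _ := Fintype.ofFinite (FreeGroup (Fin n) ⧸ derivedMSeries (FreeGroup (Fin n)) m i)
  have hSk : S ≤ k := Nat.le_ceil S
  have hcomp : ∀ x z, φ (⟨i, x⟩ : BxX n m) z ≠ 0 → z.1 = i := by
    intro x z hz
    by_contra hne
    have h4 := (bx_cross hn hm D hbox (x := ⟨i, x⟩) (y := z) (Ne.symm hne)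
      ((h3 _ _ hz).trans hSk)).1
    simp only [i] at h4
    omega
  have hsum : ∀ f : BxX n m → ℝ, (∀ z, f z ≠ 0 → z.1 = i) → ∑ᶠ z, f z = ∑ y, f ⟨i, y⟩ := by
    intro f hf'
    rw [finsum_eq_sum_of_support_subset (s := Finset.univ.map (Function.Embedding.sigmaMk i))]
    · rw [Finset.sum_map]; rfl
    · rintro ⟨j, z⟩ hz
      obtain rfl : j = i := hf' _ hz
      simp
  have hfin := bx_no_A (bxPi n m i) (bxPi_surj n m i) (S := k)
    (bx_girth_le hm (by simp only [i]; omega)) (fun x y => φ ⟨i, x⟩ ⟨i, y⟩) ?_ ?_ (1/16) ?_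
  · rw [Fintype.card_fin] at hfin
    have : (2 : ℝ) ≤ n := by exact_mod_cast hn
    linarith
  · intro x y hxy
    exact bx_same D hbox ((h3 _ _ hxy).trans hSk)
  · intro x
    rw [← h1 ⟨i, x⟩, hsum]
    intro z hz
    exact hcomp x z (left_ne_zero_of_mul hz)
  · intro x l
    have h4 := h2 ⟨i, x⟩ ⟨i, x * bxPi n m i (FreeGroup.mk [l])⟩ (by
      rw [hbox.1]
      beta_reduce
      have h5 := bxD_le (m := m) i x (FreeGroup.mk [l])
      have h6 := FreeGroup.norm_mk_le (L₁ := [l])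
      rw [List.length_singleton] at h6
      exact_mod_cast h5.trans h6)
    rw [hsum _ fun z hz => hcomp x z (left_ne_zero_of_mul hz)] at h4
    have := (abs_le.mp h4).2
    linarith

theorem bx_symm {E Z : Type*} [Fintype E] [DecidableEq E] [AddGroup Z] (ι : E × Z → ℕ)
    (hι : Function.Injective ι) (f g : E → Z) :
    (Function.support (f - g)).ncard ≤
      (symmDiff (Finset.univ.image fun e => ι (e, f e)) (Finset.univ.image fun e => ι (e, g e))).card ∧
    (symmDiff (Finset.univ.image fun e => ι (e, f e))
      (Finset.univ.image fun e => ι (e, g e))).card ≤ 2 * (Function.support (f - g)).ncard := by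
  classical
  have hs : (Function.support (f - g)) = ((Finset.univ.filter fun e => f e ≠ g e : Finset E) : Set E) := by
    ext e; simp [sub_eq_zero]
  rw [hs, Set.ncard_coe_finset]
  constructor
  · rw [← Finset.card_image_of_injective (f := fun e => ι (e, f e))
      (s := Finset.univ.filter fun e => f e ≠ g e)
      (fun a b hab => congrArg Prod.fst (hι hab))]
    apply Finset.card_le_card
    intro k hk
    obtain ⟨e, he, rfl⟩ := Finset.mem_image.mp hk
    rw [Finset.mem_symmDiff]
    left
    refine ⟨Finset.mem_image_of_mem _ (Finset.mem_univ _), ?_⟩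
    intro h
    obtain ⟨e', -, h2⟩ := Finset.mem_image.mp h
    have h3 := hι h2
    rw [Prod.mk.injEq] at h3
    obtain ⟨rfl, h4⟩ := h3
    exact (Finset.mem_filter.mp he).2 h4.symm
  · rw [two_mul]
    refine le_trans (Finset.card_le_card (t := (Finset.univ.filter fun e => f e ≠ g e).image
      (fun e => ι (e, f e)) ∪ (Finset.univ.filter fun e => f e ≠ g e).image
      (fun e => ι (e, g e))) ?_) ((Finset.card_union_le _ _).trans
        (add_le_add Finset.card_image_le Finset.card_image_le))
    intro k hk
    rw [Finset.mem_symmDiff] at hk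
    rw [Finset.mem_union]
    rcases hk with ⟨h1, h2⟩ | ⟨h1, h2⟩
    · left
      obtain ⟨e, -, rfl⟩ := Finset.mem_image.mp h1
      refine Finset.mem_image.mpr ⟨e, Finset.mem_filter.mpr ⟨Finset.mem_univ _, ?_⟩, rfl⟩
      intro he
      exact h2 (Finset.mem_image.mpr ⟨e, Finset.mem_univ _, by rw [he]⟩)
    · right
      obtain ⟨e, -, rfl⟩ := Finset.mem_image.mp h1
      refine Finset.mem_image.mpr ⟨e, Finset.mem_filter.mpr ⟨Finset.mem_univ _, ?_⟩, rfl⟩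
      intro he
      exact h2 (Finset.mem_image.mpr ⟨e, Finset.mem_univ _, by rw [he]⟩)

/-- A section of the quotient map. -/
noncomputable def bxSec (n m i : ℕ) :
    FreeGroup (Fin n) ⧸ derivedMSeries (FreeGroup (Fin n)) m i → FreeGroup (Fin n) :=
  Function.surjInv (bxPi_surj n m i)

theorem bxSec_spec {n m : ℕ} (i : ℕ) (x) : bxPi n m i (bxSec n m i x) = x :=
  Function.surjInv_eq (bxPi_surj n m i) x

/-- The flow of a point of the `(i+1)`-st quotient. -/
noncomputable def bxFl (n m i : ℕ)
    (x : FreeGroup (Fin n) ⧸ derivedMSeries (FreeGroup (Fin n)) m (i + 1)) :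
    (FreeGroup (Fin n) ⧸ derivedMSeries (FreeGroup (Fin n)) m i) × Fin n → ZMod m :=
  bxFlow m (bxPi n m i) 1 (bxSec n m (i + 1) x)

theorem bxFl_sub {n m : ℕ} (i : ℕ) (x) (w : FreeGroup (Fin n)) :
    bxFl n m i (x * bxPi n m (i + 1) w) - bxFl n m i x =
      bxFlow m (bxPi n m i) (bxPi n m i (bxSec n m (i + 1) x)) w := by
  set u := bxSec n m (i + 1) x with hu
  set v := bxSec n m (i + 1) (x * bxPi n m (i + 1) w) with hv
  have h1 : (u * w)⁻¹ * v ∈ derivedMSeries (FreeGroup (Fin n)) m (i + 1) := by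
    refine QuotientGroup.eq.mp ?_
    change bxPi n m (i + 1) (u * w) = bxPi n m (i + 1) v
    rw [hv, bxSec_spec, map_mul, hu, bxSec_spec]
  have h2 : bxFlow m (bxPi n m i) 1 v = bxFlow m (bxPi n m i) 1 (u * w) := by
    have := bxFlow_mul m (bxPi n m i) 1 (u * w) ((u * w)⁻¹ * v)
    rwa [mul_inv_cancel_left, bxFlow_succ i _ h1, add_zero] at this
  unfold bxFl
  rw [← hu, ← hv, h2, bxFlow_mul, one_mul, add_sub_cancel_left]

theorem bx_embeds {n m : ℕ} (hn : 2 ≤ n) (hm : 2 ≤ m) (D : BxX n m → BxX n m → ℝ)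
    (hbox : IsCoarseDisjointUnionOf (fun i x y => (bxD n m i x y : ℝ)) D) (hD : ∀ x y, 0 ≤ D x y) : ∃ F : BxX n m → lp (fun _ : ℕ => ℝ) 2,
    CoarseEmbeddingWith D (fun a b => dist a b) F := by
  classical
  have hfin : ∀ i, Finite (FreeGroup (Fin n) ⧸ derivedMSeries (FreeGroup (Fin n)) m i) :=
    bx_finite hm
  let _ : ∀ i, Fintype (FreeGroup (Fin n) ⧸ derivedMSeries (FreeGroup (Fin n)) m i) :=
    fun i => Fintype.ofFinite _
  have : NeZero m := ⟨by omega⟩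
  obtain ⟨ι, hι⟩ := exists_injective_nat (Σ i : ℕ,
    ((FreeGroup (Fin n) ⧸ derivedMSeries (FreeGroup (Fin n)) m i) × Fin n) × ZMod m)
  have hιi : ∀ i, Function.Injective (fun p => ι ⟨i, p⟩) :=
    fun i => hι.comp sigma_mk_injective
  let T : BxX n m → Finset ℕ := fun x => match x with
    | ⟨0, _⟩ => ∅
    | ⟨i + 1, x⟩ => Finset.univ.image fun e => ι ⟨i, (e, bxFl n m i x e)⟩
  have hT : ∀ i x, T ⟨i + 1, x⟩ = Finset.univ.image fun e => ι ⟨i, (e, bxFl n m i x e)⟩ :=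
    fun i x => rfl
  have hTc : ∀ x : BxX n m, x.1 ≤ 2 * (T x).card + 2 := by
    rintro ⟨i | i, x⟩
    · simp
    · rw [hT, Finset.card_image_of_injective _
        (fun a b hab => congrArg Prod.fst (hιi i hab)), Finset.card_univ, Fintype.card_prod,
        Fintype.card_fin]
      have h1 := bx_card hn hm i
      rw [Nat.card_eq_fintype_card] at h1
      have h2 := Nat.le_mul_of_pos_right
        (Fintype.card (FreeGroup (Fin n) ⧸ derivedMSeries (FreeGroup (Fin n)) m i))
        (show 0 < n by omega)
      simp only
      omega
  have hTd : ∀ x y : BxX n m, x.1 ≠ y.1 → Disjoint (T x) (T y) := by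
    rintro ⟨i | i, x⟩ ⟨j | j, y⟩ hij
    · simp [T]
    · simp [T]
    · simp [T]
    · rw [Finset.disjoint_left, hT, hT]
      intro k hk hk'
      obtain ⟨e, -, rfl⟩ := Finset.mem_image.mp hk
      obtain ⟨e', -, h2⟩ := Finset.mem_image.mp hk'
      have := congrArg Sigma.fst (hι h2)
      simp only at this hij
      omega
  obtain ⟨V, hV⟩ := bx_hilbert
  refine ⟨fun x => V (T x), bx_coarse D _ _ hD (fun _ _ => dist_nonneg) ?_ ?_⟩
  · intro R
    obtain ⟨C, hC⟩ := bx_bdd_lt (n := n) hm (2 * R) (fun x y => dist (V (T x)) (V (T y)))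
    refine ⟨max C (Real.sqrt (2 * R)), fun x y hxy => ?_⟩
    by_cases hne : x.1 = y.1
    · refine le_max_of_le_right ?_
      rw [hV]
      apply Real.sqrt_le_sqrt
      obtain ⟨i, x⟩ := x
      obtain ⟨j, y⟩ := y
      obtain rfl : i = j := hne
      match i, x, y, hxy with
      | 0, x, y, _ => simp [T]
      | i + 1, x, y, hxy =>
        obtain ⟨w, h1, rfl⟩ := bx_same D hbox hxy
        rw [symmDiff_comm, hT, hT]
        have h2 := (bx_symm _ (hιi i) (bxFl n m i (x * bxPi n m (i + 1) w)) (bxFl n m i x)).2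
        rw [bxFl_sub] at h2
        have h3 := bxFlow_support_card m (bxPi n m i) (bxPi n m i (bxSec n m (i + 1) x)) w
        have h4 := h2.trans (Nat.mul_le_mul_left 2 (h3.trans h1))
        exact_mod_cast h4
    · obtain ⟨h1, h2⟩ := bx_cross hn hm D hbox hne hxy
      exact le_max_of_le_left (hC x y h1 h2)
  · intro C
    let K := C ^ 2
    obtain ⟨R, hR⟩ := bx_bdd_lt (n := n) hm (2 * K + 3) D
    refine ⟨max R K, fun x y hxy => ?_⟩
    rw [hV] at hxy
    have hK : (symmDiff (T x) (T y)).card ≤ K := by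
      rw [Real.sqrt_le_left (by positivity)] at hxy
      exact_mod_cast hxy
    by_cases hsmall : x.1 < 2 * K + 3 ∧ y.1 < 2 * K + 3
    · exact le_max_of_le_left (hR x y hsmall.1 hsmall.2)
    refine le_max_of_le_right ?_
    by_cases hne : x.1 = y.1
    · obtain ⟨i, x⟩ := x
      obtain ⟨j, y⟩ := y
      obtain rfl : i = j := hne
      match i, x, y, hK, hsmall with
      | 0, x, y, _, hsmall => simp at hsmall
      | i + 1, x, y, hK, hsmall =>
        simp only at hsmall
        obtain ⟨w, hw⟩ := bxPi_surj n m (i + 1) (x⁻¹ * y)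
        obtain rfl : y = x * bxPi n m (i + 1) w := by rw [hw, mul_inv_cancel_left]
        rw [symmDiff_comm, hT, hT] at hK
        have h2 := (bx_symm _ (hιi i) (bxFl n m i (x * bxPi n m (i + 1) w)) (bxFl n m i x)).1
        rw [bxFl_sub] at h2
        obtain ⟨w', h3, h4, h5⟩ := bx_short m (bxPi n m i) hm
          (bx_girth_le (K := K) hm (by omega)) _ w (h2.trans hK)
        rw [← bx_mem_succ_of_eq i _ _ _ h4 h5, hbox.1]
        beta_reduce
        exact_mod_cast (bxD_le (m := m) (i + 1) x w').trans h3
    · exfalso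
      have h1 := hTd x y hne
      rw [h1.symmDiff_eq_sup, Finset.sup_eq_union, Finset.card_union_of_disjoint h1] at hK
      have h2 := hTc x
      have h3 := hTc y
      omega

end Final

/-- For `n ≥ 2` and an integer `m ≥ 3`, the box space of the free group `F_n` corresponding
to the derived `m`-series is a bounded geometry metric space which coarsely embeds into the
Hilbert space `ℓ²(ℕ, ℝ)` but does not have Yu's property A. -/
theorem box_space_embeds_but_no_property_A (n m : ℕ) (hn : 2 ≤ n) (hm : 3 ≤ m)
    (D : (Σ i : ℕ, FreeGroup (Fin n) ⧸ derivedMSeries (FreeGroup (Fin n)) m i) →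
         (Σ i : ℕ, FreeGroup (Fin n) ⧸ derivedMSeries (FreeGroup (Fin n)) m i) → ℝ)
    (hmet : IsMetricOn D)
    (hbox : IsCoarseDisjointUnionOf (fun i x y =>
      (quotWordDist (Set.range (FreeGroup.of : Fin n → FreeGroup (Fin n)))
        (derivedMSeries (FreeGroup (Fin n)) m i) x y : ℝ)) D) :
    BoundedGeometry D ∧
    (∃ F : (Σ i : ℕ, FreeGroup (Fin n) ⧸ derivedMSeries (FreeGroup (Fin n)) m i) →
        lp (fun _ : ℕ => ℝ) 2,
      CoarseEmbeddingWith D (fun a b => dist a b) F) ∧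
    ¬ HasPropertyA D := by
  have hm2 : 2 ≤ m := by omega
  have hD : ∀ x y, 0 ≤ D x y := by
    intro x y
    have h1 := hmet.2.2 x y x
    rw [(hmet.1 x x).mpr rfl, hmet.2.1 y x] at h1
    linarith
  exact ⟨bx_bounded hn hm2 D hbox, bx_embeds hn hm2 D hbox hD, bx_not_A hn hm2 D hbox⟩
end

section
/- Let m ≥ 3 be an integer. There exist non-decreasing functions ρ₋, ρ₊: [0,∞) → [0,∞) tending to ∞, depending only on m, with the following property: for every finite connected 2-connected graph X such that the number N of maximal spanning trees of X not containing a given edge is independent of the edge, the ℤ_m-homology cover X̃ of X admits a map F: X̃ → ℓ²(ℕ,ℝ) satisfying ρ₋(d_Q(x,y)) ≤ ‖F(x) − F(y)‖ ≤ ρ₊(d_Q(x,y)) for all x,y ∈ X̃, where d_Q is the spanning-tree pseudometric on X̃. -/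
open Filter
open scoped ENNReal NNReal

namespace MultiGraph

variable {V E : Type*}

/-- The initial vertex of a step traversing the edge `s.1` forwards (`s.2 = true`) or
backwards (`s.2 = false`). -/
def stepSrc (src tgt : E → V) (s : E × Bool) : V := if s.2 then src s.1 else tgt s.1

/-- The terminal vertex of a step. -/
def stepTgt (src tgt : E → V) (s : E × Bool) : V := if s.2 then tgt s.1 else src s.1

/-- `p` is a walk from `a` to `b` in the multigraph with edge endpoint maps `src`, `tgt`. -/
def IsWalk (src tgt : E → V) : V → V → List (E × Bool) → Prop
  | a, b, [] => a = b
  | a, b, s :: p => stepSrc src tgt s = a ∧ IsWalk src tgt (stepTgt src tgt s) b p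

/-- The multigraph is connected. -/
def Connected (src tgt : E → V) : Prop := ∀ a b : V, ∃ p, IsWalk src tgt a b p

/-- The graph distance between two vertices (with junk value if there is no walk). -/
noncomputable def gdist (src tgt : E → V) (a b : V) : ℕ :=
  sInf {n | ∃ p, IsWalk src tgt a b p ∧ p.length = n}

/-- A cycle based at `a`: a nonempty closed walk repeating no edge and no vertex. -/
def IsCycle (src tgt : E → V) (a : V) (p : List (E × Bool)) : Prop :=
  IsWalk src tgt a a p ∧ p ≠ [] ∧ (p.map Prod.fst).Nodup ∧ (p.map (stepSrc src tgt)).Nodup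

/-- The girth: the length of a shortest cycle (`⊤` if there are no cycles). -/
noncomputable def girth (src tgt : E → V) : ℕ∞ :=
  sInf {n : ℕ∞ | ∃ (a : V) (p : List (E × Bool)), IsCycle src tgt a p ∧ (p.length : ℕ∞) = n}

/-- Removing any single edge leaves the graph connected. -/
def TwoConnected (src tgt : E → V) : Prop :=
  ∀ (e : E) (a b : V), ∃ p, IsWalk src tgt a b p ∧ ∀ s ∈ p, s.1 ≠ e

/-- `T` is the edge set of a maximal spanning tree: every pair of vertices is joined by a
walk through `T`, and every cycle of the graph uses an edge outside `T`. -/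
def IsSpanningTree (src tgt : E → V) (T : Set E) : Prop :=
  (∀ a b : V, ∃ p, IsWalk src tgt a b p ∧ ∀ s ∈ p, s.1 ∈ T) ∧
  ∀ (a : V) (p : List (E × Bool)), IsCycle src tgt a p → ∃ s ∈ p, s.1 ∉ T

/-- The number `N_e` of maximal spanning trees avoiding the edge `e`. -/
noncomputable def numTreesAvoiding (src tgt : E → V) (e : E) : ℕ :=
  Nat.card {T : Set E // IsSpanningTree src tgt T ∧ e ∉ T}

open Classical in
/-- A chosen geodesic from `a` to `b` (junk value `[]` if there is no walk). -/
noncomputable def geod (src tgt : E → V) (a b : V) : List (E × Bool) :=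
  if h : ∃ p, IsWalk src tgt a b p ∧ p.length = gdist src tgt a b then h.choose else []

open Classical in
/-- The number of times the walk `p` traverses the edge `e` in the positive direction. -/
noncomputable def countF (e : E) (p : List (E × Bool)) : ℕ :=
  (p.filter fun s => s.1 = e ∧ s.2 = true).length

open Classical in
/-- The number of times the walk `p` traverses the edge `e` in the negative direction. -/
noncomputable def countB (e : E) (p : List (E × Bool)) : ℕ :=
  (p.filter fun s => s.1 = e ∧ s.2 = false).length

/-- Two walks are `m`-congruent if for every edge the signed numbers of traversals agree
modulo `m`. -/
def MCongruent (m : ℕ) (p₁ p₂ : List (E × Bool)) : Prop :=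
  ∀ e : E, ((countF e p₁ : ℤ) - (countB e p₁ : ℤ)) ≡
    ((countF e p₂ : ℤ) - (countB e p₂ : ℤ)) [ZMOD (m : ℤ)]

/-- A walk has no backtrack if no step is immediately followed by the same edge reversed. -/
def NoBacktrack (p : List (E × Bool)) : Prop :=
  List.Chain' (fun s s' => ¬(s'.1 = s.1 ∧ s'.2 = !s.2)) p

section Cover

open Classical in
/-- The image in `(ℤ/m)^{E ∖ T₀}` of the generator of `π₁` corresponding to the edge `e`
(trivial if `e` lies in the maximal spanning tree `T₀`). -/
noncomputable def coverRho (m : ℕ) (T₀ : Set E) (e : E) : {e' : E // e' ∉ T₀} → ZMod m :=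
  fun f => if f.1 = e then 1 else 0

/-- Source map of the `ℤ/m`-homology cover built from the maximal spanning tree `T₀`:
the lift `(e, k)` of the edge `e` starts at `(src e, k)`. -/
def coverSrc (m : ℕ) (src : E → V) (T₀ : Set E) :
    E × ({e' : E // e' ∉ T₀} → ZMod m) → V × ({e' : E // e' ∉ T₀} → ZMod m) :=
  fun ek => (src ek.1, ek.2)

/-- Target map of the `ℤ/m`-homology cover: the lift `(e, k)` of the edge `e` ends at
`(tgt e, k + ρ(e))`. -/
noncomputable def coverTgt (m : ℕ) (tgt : E → V) (T₀ : Set E) :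
    E × ({e' : E // e' ∉ T₀} → ZMod m) → V × ({e' : E // e' ∉ T₀} → ZMod m) :=
  fun ek => (tgt ek.1, ek.2 + coverRho m T₀ ek.1)

open Classical in
/-- The number of positively oriented lifts of the edge `e` traversed by a walk in the cover. -/
noncomputable def countLiftF (m : ℕ) (T₀ : Set E) (e : E)
    (p : List ((E × ({e' : E // e' ∉ T₀} → ZMod m)) × Bool)) : ℕ :=
  (p.filter fun s => s.1.1 = e ∧ s.2 = true).length

open Classical in
/-- The number of negatively oriented lifts of the edge `e` traversed by a walk in the cover. -/
noncomputable def countLiftB (m : ℕ) (T₀ : Set E) (e : E)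
    (p : List ((E × ({e' : E // e' ∉ T₀} → ZMod m)) × Bool)) : ℕ :=
  (p.filter fun s => s.1.1 = e ∧ s.2 = false).length

/-- `φ(e, x, y)`: the smallest non-negative residue modulo `m` of the absolute difference
between the numbers of positively and negatively oriented lifts of `e` traversed by the
chosen geodesic from `x` to `y` in the `ℤ/m`-homology cover. -/
noncomputable def phi (m : ℕ) (src tgt : E → V) (T₀ : Set E) (e : E)
    (x y : V × ({e' : E // e' ∉ T₀} → ZMod m)) : ℕ :=
  (((countLiftF m T₀ e (geod (coverSrc m src T₀) (coverTgt m tgt T₀) x y) : ℤ) -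
      (countLiftB m T₀ e (geod (coverSrc m src T₀) (coverTgt m tgt T₀) x y) : ℤ)).natAbs) % m

/-- The pseudometric `d_Q` on the `ℤ/m`-homology cover:
`d_Q(x,y) = Σ_{e ∈ E} Σ_{T : e ∉ T} (1/N_e) · min{φ(e,x,y), m − φ(e,x,y)}`,
the inner sum ranging over maximal spanning trees not containing `e`. -/
noncomputable def dQ (m : ℕ) (src tgt : E → V) (T₀ : Set E)
    (x y : V × ({e' : E // e' ∉ T₀} → ZMod m)) : ℝ :=
  ∑ᶠ (e : E), ∑ᶠ (T : Set E) (_ : IsSpanningTree src tgt T ∧ e ∉ T),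
    (1 / (numTreesAvoiding src tgt e : ℝ)) *
      min (phi m src tgt T₀ e x y : ℝ) ((m : ℝ) - (phi m src tgt T₀ e x y : ℝ))

open Classical in
/-- The distance `d_T(C^T_x, C^T_y)` between the clouds of `x` and `y` in the Cayley graph
of `(ℤ/m)^{E ∖ T}` obtained by collapsing the clouds associated to the maximal spanning
tree `T`: the least number of lifts of edges outside `T` traversed by a walk from `x` to `y`
in the cover. -/
noncomputable def cloudDist (m : ℕ) (src tgt : E → V) (T₀ : Set E) (T : Set E)
    (x y : V × ({e' : E // e' ∉ T₀} → ZMod m)) : ℕ :=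
  sInf {n | ∃ p, IsWalk (coverSrc m src T₀) (coverTgt m tgt T₀) x y p ∧
    (p.filter fun s => s.1.1 ∉ T).length = n}

open Classical in
/-- The cloud `C^T_x ∈ (ℤ/m)^{E ∖ T}` containing `x`, computed from a chosen geodesic from a
fixed basepoint of the cover to `x` by counting signed traversals of lifts of edges outside
`T`. -/
noncomputable def cloud (m : ℕ) (src tgt : E → V) (T₀ : Set E) (T : Set E)
    (x : V × ({e' : E // e' ∉ T₀} → ZMod m)) : {e : E // e ∉ T} → ZMod m :=
  if h : Nonempty (V × ({e' : E // e' ∉ T₀} → ZMod m)) then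
    fun f =>
      (((countLiftF m T₀ f.1 (geod (coverSrc m src T₀) (coverTgt m tgt T₀) h.some x) : ℤ) -
        (countLiftB m T₀ f.1 (geod (coverSrc m src T₀) (coverTgt m tgt T₀) h.some x) : ℤ)
          : ℤ) : ZMod m)
  else fun _ => 0

end Cover

/-- `(pV, pE)` is a covering of multigraphs: it commutes with the endpoint maps, and steps
lift uniquely at every vertex. -/
def IsGraphCovering {V' E' : Type*} (src tgt : E → V) (src' tgt' : E' → V')
    (pV : V' → V) (pE : E' → E) : Prop :=
  (∀ e : E', pV (src' e) = src (pE e)) ∧ (∀ e : E', pV (tgt' e) = tgt (pE e)) ∧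
  ∀ (v' : V') (s : E × Bool), stepSrc src tgt s = pV v' →
    ∃! s' : E' × Bool, stepSrc src' tgt' s' = v' ∧ pE s'.1 = s.1 ∧ s'.2 = s.2

end MultiGraph

/-- The word length of `a` with respect to the symmetrization of the generating set `S`
in an additive group. -/
noncomputable def addWordLength {A : Type*} [AddGroup A] (S : Set A) (a : A) : ℕ :=
  sInf {n | ∃ l : List A, (∀ x ∈ l, x ∈ S ∨ -x ∈ S) ∧ l.sum = a ∧ l.length = n}

open Classical in
/-- The word metric on `(ℤ/m)^r` with respect to the standard generating set
(one canonical generator for each factor). -/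
noncomputable def zmodWordDist (m r : ℕ) (a b : Fin r → ZMod m) : ℕ :=
  addWordLength {g : Fin r → ZMod m | ∃ i : Fin r, g = Pi.single i 1} (b - a)

namespace MultiGraph

theorem IsWalk.append {V E : Type*} {src tgt : E → V} {a b c : V} {p q : List (E × Bool)}
    (hp : IsWalk src tgt a b p) (hq : IsWalk src tgt b c q) : IsWalk src tgt a c (p ++ q) := by
  induction p generalizing a with
  | nil => simp only [IsWalk] at hp; subst hp; simpa using hq
  | cons s p ih => exact ⟨hp.1, ih hp.2⟩

/-- suffix of a simple walk starting at a visited vertex -/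
theorem exists_suffix {V E : Type*} {src tgt : E → V} {a b c : V} {p : List (E × Bool)}
    (hp : IsWalk src tgt a b p) (hn : (p.map (stepSrc src tgt) ++ [b]).Nodup)
    (hc : c ∈ p.map (stepSrc src tgt) ++ [b]) :
    ∃ q, IsWalk src tgt c b q ∧ (q.map (stepSrc src tgt) ++ [b]).Nodup ∧ ∀ s ∈ q, s ∈ p := by
  induction p generalizing a with
  | nil =>
    simp only [List.map_nil, List.nil_append, List.mem_singleton] at hc
    exact ⟨[], hc, by simp, by simp⟩
  | cons s p ih =>
    by_cases h : c = stepSrc src tgt s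
    · exact ⟨s :: p, ⟨h.symm, hp.2⟩, hn, fun s hs => hs⟩
    · have hn' : (p.map (stepSrc src tgt) ++ [b]).Nodup := by
        rw [List.map_cons, List.cons_append, List.nodup_cons] at hn
        exact hn.2
      have hc' : c ∈ p.map (stepSrc src tgt) ++ [b] := by
        rw [List.map_cons, List.cons_append, List.mem_cons] at hc
        exact hc.resolve_left h
      obtain ⟨q, h1, h2, h3⟩ := ih hp.2 hn' hc'
      exact ⟨q, h1, h2, fun s hs => List.mem_cons_of_mem _ (h3 s hs)⟩

theorem exists_simple {V E : Type*} {src tgt : E → V} {a b : V} {p : List (E × Bool)}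
    (hp : IsWalk src tgt a b p) :
    ∃ q, IsWalk src tgt a b q ∧ (q.map (stepSrc src tgt) ++ [b]).Nodup ∧ ∀ s ∈ q, s ∈ p := by
  induction p generalizing a with
  | nil => exact ⟨[], hp, by simp, by simp⟩
  | cons s p ih =>
    obtain ⟨q, h1, h2, h3⟩ := ih hp.2
    by_cases h : a ∈ q.map (stepSrc src tgt) ++ [b]
    · obtain ⟨r, g1, g2, g3⟩ := exists_suffix h1 h2 h
      exact ⟨r, g1, g2, fun s hs => List.mem_cons_of_mem _ (h3 s (g3 s hs))⟩
    · refine ⟨s :: q, ⟨hp.1, h1⟩, ?_, ?_⟩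
      · rw [List.map_cons, List.cons_append, List.nodup_cons, hp.1]
        exact ⟨h, h2⟩
      · intro t ht
        rcases List.mem_cons.1 ht with rfl | ht
        · simp
        · exact List.mem_cons_of_mem _ (h3 t ht)

theorem start_mem {V E : Type*} {src tgt : E → V} {a b : V} {p : List (E × Bool)}
    (hp : IsWalk src tgt a b p) : a ∈ p.map (stepSrc src tgt) ++ [b] := by
  cases p with
  | nil => simp only [IsWalk] at hp; simp [hp]
  | cons s p => simp [← hp.1]

theorem stepTgt_mem {V E : Type*} {src tgt : E → V} {a b : V} {p : List (E × Bool)}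
    (hp : IsWalk src tgt a b p) {s : E × Bool} (hs : s ∈ p) :
    stepTgt src tgt s ∈ p.map (stepSrc src tgt) ++ [b] := by
  induction p generalizing a with
  | nil => simp at hs
  | cons t p ih =>
    rw [List.map_cons, List.cons_append]
    rcases List.mem_cons.1 hs with rfl | hs
    · exact List.mem_cons_of_mem _ (start_mem hp.2)
    · exact List.mem_cons_of_mem _ (ih hp.2 hs)

theorem edges_nodup {V E : Type*} {src tgt : E → V} {a b : V} {p : List (E × Bool)}
    (hp : IsWalk src tgt a b p) (hn : (p.map (stepSrc src tgt) ++ [b]).Nodup) :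
    (p.map Prod.fst).Nodup := by
  induction p generalizing a with
  | nil => simp
  | cons s p ih =>
    rw [List.map_cons, List.cons_append, List.nodup_cons] at hn
    rw [List.map_cons, List.nodup_cons]
    refine ⟨?_, ih hp.2 hn.2⟩
    intro h
    obtain ⟨t, ht, hts⟩ := List.mem_map.1 h
    apply hn.1
    have h1 : stepSrc src tgt t ∈ p.map (stepSrc src tgt) ++ [b] :=
      List.mem_append_left _ (List.mem_map_of_mem ht)
    have h2 := stepTgt_mem hp.2 ht
    rcases s with ⟨e, _ | _⟩ <;> rcases t with ⟨e', _ | _⟩ <;>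
      simp only [stepSrc, stepTgt] at h1 h2 hts ⊢ <;> subst hts <;> first | exact h1 | exact h2

/-- In a spanning tree, the end points of an edge are separated by removing it. -/
theorem tree_separates {V E : Type*} {src tgt : E → V} {T : Set E}
    (hT : IsSpanningTree src tgt T) {e : E} (he : e ∈ T) :
    ¬ ∃ p, IsWalk src tgt (tgt e) (src e) p ∧ ∀ s ∈ p, s.1 ∈ T ∧ s.1 ≠ e := by
  rintro ⟨p, hp, hpe⟩
  obtain ⟨q, h1, h2, h3⟩ := exists_simple hp
  have hc : IsCycle src tgt (src e) ((e, true) :: q) := by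
    refine ⟨⟨by simp [stepSrc], by simpa [stepTgt] using h1⟩, by simp, ?_, ?_⟩
    · rw [List.map_cons, List.nodup_cons]
      refine ⟨?_, edges_nodup h1 h2⟩
      intro h
      obtain ⟨t, ht, hts⟩ := List.mem_map.1 h
      exact (hpe t (h3 t ht)).2 hts
    · rw [List.map_cons]
      rw [List.nodup_append_comm] at h2
      simpa [stepSrc] using h2
  obtain ⟨s, hs, hsT⟩ := hT.2 _ _ hc
  rcases List.mem_cons.1 hs with rfl | hs
  · exact hsT he
  · exact hsT (hpe s (h3 s hs)).1

open Classical in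
/-- indicator of the component of `tgt e` in `T ∖ e` -/
theorem exists_cut {V E : Type*} {src tgt : E → V} {T : Set E}
    (hT : IsSpanningTree src tgt T) {e : E} (he : e ∈ T) (R : Type*) [CommRing R] :
    ∃ h : V → R, ∀ e' ∈ T, h (tgt e') = h (src e') + if e' = e then 1 else 0 := by
  refine ⟨fun v => if ∃ p, IsWalk src tgt (tgt e) v p ∧ ∀ s ∈ p, s.1 ∈ T ∧ s.1 ≠ e
    then 1 else 0, ?_⟩
  intro e' he'
  by_cases h : e' = e
  · subst h
    have h0 := tree_separates hT he
    have h1 : ∃ p, IsWalk src tgt (tgt e') (tgt e') p ∧ ∀ s ∈ p, s.1 ∈ T ∧ s.1 ≠ e' :=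
      ⟨[], rfl, by simp⟩
    simp only [if_neg h0, if_pos h1]
    simp
  · have : (∃ p, IsWalk src tgt (tgt e) (tgt e') p ∧ ∀ s ∈ p, s.1 ∈ T ∧ s.1 ≠ e) ↔
        (∃ p, IsWalk src tgt (tgt e) (src e') p ∧ ∀ s ∈ p, s.1 ∈ T ∧ s.1 ≠ e) := by
      constructor
      · rintro ⟨p, hp, hpe⟩
        refine ⟨p ++ [(e', false)], hp.append ⟨by simp [stepSrc], by simp [stepTgt, IsWalk]⟩, ?_⟩
        intro s hs
        rcases List.mem_append.1 hs with hs | hs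
        · exact hpe s hs
        · rw [List.mem_singleton.1 hs]; exact ⟨he', h⟩
      · rintro ⟨p, hp, hpe⟩
        refine ⟨p ++ [(e', true)], hp.append ⟨by simp [stepSrc], by simp [stepTgt, IsWalk]⟩, ?_⟩
        intro s hs
        rcases List.mem_append.1 hs with hs | hs
        · exact hpe s hs
        · rw [List.mem_singleton.1 hs]; exact ⟨he', h⟩
    simp only [this, if_neg h, add_zero]

open Classical in
/-- The signed count of `e` is a coboundary on the homology cover. -/
theorem exists_potential {V E : Type*} [Fintype E] {src tgt : E → V} {T : Set E} (m : ℕ)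
    (hT : IsSpanningTree src tgt T) (e : E) :
    ∃ f : V × ({e' : E // e' ∉ T} → ZMod m) → ZMod m, ∀ ek,
      f (coverTgt m tgt T ek) = f (coverSrc m src T ek) + if ek.1 = e then 1 else 0 := by
  by_cases he : e ∈ T
  · obtain ⟨h, hh⟩ := exists_cut hT he (ZMod m)
    refine ⟨fun x => h x.1 - ∑ g : {e' : E // e' ∉ T}, (h (tgt g) - h (src g)) * x.2 g, ?_⟩
    rintro ⟨e', k⟩
    simp only [coverTgt, coverSrc, Pi.add_apply, mul_add, Finset.sum_add_distrib]
    by_cases he' : e' ∈ T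
    · have : ∑ g : {e' : E // e' ∉ T}, (h (tgt g) - h (src g)) * coverRho m T e' g = 0 := by
        apply Finset.sum_eq_zero
        intro g _
        have : (g : E) ≠ e' := fun hg => g.2 (hg ▸ he')
        simp [coverRho, this]
      rw [this, hh e' he']; ring
    · have : ∑ g : {e' : E // e' ∉ T}, (h (tgt g) - h (src g)) * coverRho m T e' g =
          h (tgt e') - h (src e') := by
        rw [Finset.sum_eq_single (⟨e', he'⟩ : {e' : E // e' ∉ T})]
        · simp [coverRho]
        · intro g _ hg
          have : (g : E) ≠ e' := fun hg' => hg (Subtype.ext hg')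
          simp [coverRho, this]
        · simp
      have hne : e' ≠ e := fun h => he' (h ▸ he)
      rw [this, if_neg hne]; ring
  · refine ⟨fun x => x.2 ⟨e, he⟩, ?_⟩
    rintro ⟨e', k⟩
    simp [coverTgt, coverSrc, coverRho, eq_comm]

open Classical in
theorem potential_walk {V E : Type*} {src tgt : E → V} {T : Set E} {m : ℕ} {e : E}
    {f : V × ({e' : E // e' ∉ T} → ZMod m) → ZMod m}
    (hf : ∀ ek, f (coverTgt m tgt T ek) = f (coverSrc m src T ek) + if ek.1 = e then 1 else 0)
    {x y} {p} (hp : IsWalk (coverSrc m src T) (coverTgt m tgt T) x y p) :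
    (((countLiftF m T e p : ℤ) - (countLiftB m T e p : ℤ) : ℤ) : ZMod m) = f y - f x := by
  induction p generalizing x with
  | nil => simp only [IsWalk] at hp; subst hp; simp [countLiftF, countLiftB]
  | cons s p ih =>
    have h1 := ih hp.2
    obtain ⟨hs, -⟩ := hp
    subst hs
    rcases s with ⟨ek, b⟩
    have h2 := hf ek
    rcases b with _ | _ <;> by_cases h : ek.1 = e <;>
      simp [countLiftF, countLiftB, stepSrc, stepTgt, h] at h1 h2 ⊢ <;>
      simp only [h2] at * <;> linear_combination h1

theorem cover_connected {V E : Type*} [Fintype E] {src tgt : E → V} {T : Set E} {m : ℕ}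
    [NeZero m] (hT : IsSpanningTree src tgt T) :
    Connected (coverSrc m src T) (coverTgt m tgt T) := by
  classical
  have step1 : ∀ (k : {e' : E // e' ∉ T} → ZMod m) (p : List (E × Bool)) (a b : V),
      IsWalk src tgt a b p → (∀ s ∈ p, s.1 ∈ T) →
      ∃ q, IsWalk (coverSrc m src T) (coverTgt m tgt T) (a, k) (b, k) q := by
    intro k p
    induction p with
    | nil => intro a b h _; exact ⟨[], by simp only [IsWalk] at h ⊢; rw [h]⟩
    | cons s p ih =>
      intro a b h hs
      obtain ⟨q, hq⟩ := ih _ b h.2 (fun t ht => hs t (List.mem_cons_of_mem _ ht))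
      have hsT := hs s (by simp)
      have h0 : coverRho m T s.1 = 0 := by
        funext g
        have : (g : E) ≠ s.1 := fun hg => g.2 (hg ▸ hsT)
        simp [coverRho, this]
      refine ⟨((s.1, k), s.2) :: q, ?_, ?_⟩
      · rw [← h.1]
        rcases s with ⟨e, _ | _⟩ <;> simp_all [stepSrc, coverSrc, coverTgt]
      · convert hq using 1
        rcases s with ⟨e, _ | _⟩ <;> simp_all [stepTgt, coverSrc, coverTgt]
  have step1' : ∀ (k : {e' : E // e' ∉ T} → ZMod m) (a b : V),
      ∃ q, IsWalk (coverSrc m src T) (coverTgt m tgt T) (a, k) (b, k) q := by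
    intro k a b
    obtain ⟨p, hp, hpT⟩ := hT.1 a b
    exact step1 k p a b hp hpT
  let S : AddSubmonoid ({e' : E // e' ∉ T} → ZMod m) :=
    { carrier := {d | ∀ v k, ∃ q,
        IsWalk (coverSrc m src T) (coverTgt m tgt T) (v, k) (v, k + d) q}
      zero_mem' := fun v k => ⟨[], by simp [IsWalk]⟩
      add_mem' := by
        intro a b ha hb v k
        obtain ⟨q, hq⟩ := ha v k
        obtain ⟨r, hr⟩ := hb v (k + a)
        exact ⟨q ++ r, by rw [← add_assoc]; exact hq.append hr⟩ }
  have gen : ∀ g : {e' : E // e' ∉ T}, (Pi.single g 1 : {e' : E // e' ∉ T} → ZMod m) ∈ S := by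
    intro g v k
    have hr : coverRho m T g.1 = Pi.single g 1 := by
      funext g'
      simp [coverRho, Pi.single_apply, Subtype.ext_iff]
    obtain ⟨p, hp⟩ := step1' k v (src g)
    obtain ⟨q, hq⟩ := step1' (k + Pi.single g 1) (tgt g) v
    refine ⟨p ++ ((g.1, k), true) :: q, hp.append ⟨by simp [stepSrc, coverSrc], ?_⟩⟩
    simpa [stepTgt, coverTgt, hr] using hq
  have all : ∀ d, d ∈ S := by
    intro d
    have : d = ∑ g, (d g).val • (Pi.single g 1 : {e' : E // e' ∉ T} → ZMod m) := by
      funext g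
      rw [Finset.sum_apply, Finset.sum_eq_single g]
      · rw [Pi.smul_apply, Pi.single_eq_same, nsmul_eq_mul, mul_one, ZMod.natCast_zmod_val]
      · intro g' _ hg
        rw [Pi.smul_apply, Pi.single_eq_of_ne hg.symm, smul_zero]
      · simp
    rw [this]
    exact S.sum_mem fun g _ => S.nsmul_mem (gen g) _
  rintro ⟨a, k⟩ ⟨b, l⟩
  obtain ⟨p, hp⟩ := all (l - k) a k
  obtain ⟨q, hq⟩ := step1' l a b
  exact ⟨p ++ q, hp.append (by simpa using hq)⟩

theorem geod_isWalk {V E : Type*} {src tgt : E → V} {a b : V}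
    (h : ∃ p, IsWalk src tgt a b p) : IsWalk src tgt a b (geod src tgt a b) := by
  have h' : ∃ p, IsWalk src tgt a b p ∧ p.length = gdist src tgt a b := by
    have : gdist src tgt a b ∈ {n | ∃ p, IsWalk src tgt a b p ∧ p.length = n} := by
      apply Nat.sInf_mem
      obtain ⟨p, hp⟩ := h
      exact ⟨p.length, p, hp, rfl⟩
    exact this
  unfold geod
  rw [dif_pos h']
  exact h'.choose_spec.1

open Classical in
theorem dQ_eq {V E : Type*} [Fintype E] (src tgt : E → V) (T : Set E) (m : ℕ) (x y) :
    dQ m src tgt T x y = ∑ e : E, (if numTreesAvoiding src tgt e = 0 then 0 else 1) *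
      min (phi m src tgt T e x y : ℝ) ((m : ℝ) - (phi m src tgt T e x y : ℝ)) := by
  unfold dQ
  rw [finsum_eq_sum_of_fintype]
  refine Finset.sum_congr rfl fun e _ => ?_
  rw [finsum_eq_sum_of_fintype]
  simp only [finsum_eq_if]
  rw [← Finset.sum_filter, Finset.sum_const, nsmul_eq_mul]
  have : (Finset.univ.filter fun T => IsSpanningTree src tgt T ∧ e ∉ T).card =
      numTreesAvoiding src tgt e := by
    rw [numTreesAvoiding, Nat.card_eq_fintype_card, Fintype.card_subtype]
  rw [this]
  split_ifs with h
  · simp [h]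
  · field_simp

theorem exists_lp_map {X ι : Type*} [Fintype ι] (h : X → ι → ℝ) :
    ∃ F : X → lp (fun _ : ℕ => ℝ) 2, ∀ x y, dist (F x) (F y) ^ 2 = ∑ i, (h x i - h y i) ^ 2 := by
  classical
  let idx := Fintype.equivFin ι
  let g : X → ℕ → ℝ := fun x n =>
    if hn : n < Fintype.card ι then h x (idx.symm ⟨n, hn⟩) else 0
  refine ⟨fun x => ∑ n ∈ Finset.range (Fintype.card ι), lp.single 2 n (g x n), fun x y => ?_⟩
  have h2 : (0 : ℝ) < (2 : ℝ≥0∞).toReal := by norm_num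
  have := lp.norm_sum_single (E := fun _ : ℕ => ℝ) h2 (fun n => g x n - g y n)
    (Finset.range (Fintype.card ι))
  rw [dist_eq_norm, ← Finset.sum_sub_distrib]
  simp only [lp.single_sub, ENNReal.toReal_ofNat, Real.rpow_ofNat] at this
  rw [this, Finset.sum_range, ← idx.symm.sum_comp]
  refine Finset.sum_congr rfl fun i _ => ?_
  simp [g]

theorem min_bounds {m : ℕ} (hm : 3 ≤ m) (z : ℤ) :
    (if (z : ZMod m) = 0 then (0 : ℝ) else 1) ≤
      min ((z.natAbs % m : ℕ) : ℝ) ((m : ℝ) - ((z.natAbs % m : ℕ) : ℝ)) ∧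
    min ((z.natAbs % m : ℕ) : ℝ) ((m : ℝ) - ((z.natAbs % m : ℕ) : ℝ)) ≤
      m * (if (z : ZMod m) = 0 then (0 : ℝ) else 1) := by
  have hiff : (z : ZMod m) = 0 ↔ z.natAbs % m = 0 := by
    rw [ZMod.intCast_zmod_eq_zero_iff_dvd, Int.natCast_dvd, Nat.dvd_iff_mod_eq_zero]
  have hlt : z.natAbs % m < m := Nat.mod_lt _ (by omega)
  generalize z.natAbs % m = r at *
  by_cases h : r = 0
  · simp [hiff, h]
  · rw [if_neg (by rwa [hiff])]
    have h1 : (1 : ℝ) ≤ r := by exact_mod_cast Nat.one_le_iff_ne_zero.2 h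
    have h2 : (r : ℝ) + 1 ≤ m := by exact_mod_cast hlt
    refine ⟨le_min h1 (by linarith), (min_le_left _ _).trans (by linarith)⟩

end MultiGraph

open MultiGraph in
/-- **Uniform embeddability of homology covers with respect to `d_Q`**: for every `m ≥ 3`
there are non-decreasing functions `ρ₋, ρ₊` tending to infinity, depending only on `m`,
such that every `ℤ/m`-homology cover `X̃` of a finite connected 2-connected graph `X`
(whose number of maximal spanning trees avoiding an edge does not depend on the edge)
admits a map `F` to `ℓ²(ℕ, ℝ)` with
`ρ₋(d_Q(x,y)) ≤ ‖F x − F y‖ ≤ ρ₊(d_Q(x,y))` for all `x, y ∈ X̃`. -/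
theorem homology_cover_embeds_uniformly (m : ℕ) (hm : 3 ≤ m) :
    ∃ ρminus ρplus : ℝ → ℝ, Monotone ρminus ∧ Monotone ρplus ∧
      Tendsto ρminus atTop atTop ∧ Tendsto ρplus atTop atTop ∧
      ∀ (V E : Type) (_ : Fintype V) (_ : Fintype E) (src tgt : E → V),
        Connected src tgt → TwoConnected src tgt →
        (∀ e e' : E, numTreesAvoiding src tgt e = numTreesAvoiding src tgt e') →
        ∀ T₀ : Set E, IsSpanningTree src tgt T₀ →
          ∃ F : (V × ({e : E // e ∉ T₀} → ZMod m)) → lp (fun _ : ℕ => ℝ) 2,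
            ∀ x y : V × ({e : E // e ∉ T₀} → ZMod m),
              ρminus (dQ m src tgt T₀ x y) ≤ dist (F x) (F y) ∧
              dist (F x) (F y) ≤ ρplus (dQ m src tgt T₀ x y) := by
  classical
  have hm0 : (0 : ℝ) < m := by exact_mod_cast (by omega : 0 < m)
  have : NeZero m := ⟨by omega⟩
  refine ⟨fun t => Real.sqrt (2 / m * t), fun t => Real.sqrt (2 * t), ?_, ?_, ?_, ?_, ?_⟩
  · intro a b hab
    exact Real.sqrt_le_sqrt (by gcongr)
  · intro a b hab
    exact Real.sqrt_le_sqrt (by gcongr)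
  · exact Real.tendsto_sqrt_atTop.comp (tendsto_id.const_mul_atTop (by positivity))
  · exact Real.tendsto_sqrt_atTop.comp (tendsto_id.const_mul_atTop (by positivity))
  intro V E _ _ src tgt _ _ _ T₀ hT
  choose f hf using fun e => exists_potential m hT e
  let w : E → ℝ := fun e => if numTreesAvoiding src tgt e = 0 then 0 else 1
  have hw : ∀ e, w e ^ 2 = w e := by intro e; simp only [w]; split_ifs <;> simp
  have hw0 : ∀ e, 0 ≤ w e := by intro e; simp only [w]; split_ifs <;> simp
  obtain ⟨F, hF⟩ := exists_lp_map (X := V × ({e : E // e ∉ T₀} → ZMod m)) (ι := E × ZMod m)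
    (fun x i => w i.1 * if f i.1 x = i.2 then 1 else 0)
  refine ⟨F, fun x y => ?_⟩
  have hind : ∀ a b : ZMod m, ∑ c : ZMod m,
      (((if a = c then 1 else 0) - (if b = c then 1 else 0)) ^ 2 : ℝ) =
        2 * if b - a = 0 then 0 else 1 := by
    intro a b
    by_cases hab : a = b
    · subst hab; simp
    · have hba : ¬ (b - a = 0) := fun h => hab (sub_eq_zero.1 h).symm
      have : ∀ c : ZMod m, (((if a = c then 1 else 0) - (if b = c then 1 else 0)) ^ 2 : ℝ) =
          (if a = c then 1 else 0) + (if b = c then 1 else 0) := by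
        intro c
        by_cases h1 : a = c
        · have h2 : b ≠ c := fun h2 => hab (h1.trans h2.symm)
          simp [h1, h2]
        · by_cases h2 : b = c <;> simp [h1, h2]
      simp only [this, Finset.sum_add_distrib, if_neg hba]
      simp; norm_num
  have hdist : dist (F x) (F y) ^ 2 =
      2 * ∑ e, w e * (if f e y - f e x = 0 then 0 else 1) := by
    rw [hF, Fintype.sum_prod_type, Finset.mul_sum]
    refine Finset.sum_congr rfl fun e _ => ?_
    simp only [← mul_sub, mul_pow, hw]
    rw [← Finset.mul_sum, hind]; ring
  have hwalk := geod_isWalk (cover_connected (m := m) hT x y)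
  have hb : ∀ e, (if f e y - f e x = 0 then (0 : ℝ) else 1) ≤
      min (phi m src tgt T₀ e x y : ℝ) ((m : ℝ) - (phi m src tgt T₀ e x y : ℝ)) ∧
      min (phi m src tgt T₀ e x y : ℝ) ((m : ℝ) - (phi m src tgt T₀ e x y : ℝ)) ≤
      m * (if f e y - f e x = 0 then (0 : ℝ) else 1) := by
    intro e
    have h1 := potential_walk (hf e) hwalk
    have h2 := min_bounds hm
      ((countLiftF m T₀ e (geod (coverSrc m src T₀) (coverTgt m tgt T₀) x y) : ℤ) -
      (countLiftB m T₀ e (geod (coverSrc m src T₀) (coverTgt m tgt T₀) x y) : ℤ))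
    simp only [h1] at h2
    exact h2
  have hlow : 2 / m * dQ m src tgt T₀ x y ≤ dist (F x) (F y) ^ 2 := by
    have : dQ m src tgt T₀ x y ≤ m * ∑ e, w e * (if f e y - f e x = 0 then 0 else 1) := by
      rw [dQ_eq, Finset.mul_sum]
      refine Finset.sum_le_sum fun e _ => ?_
      have := mul_le_mul_of_nonneg_left (hb e).2 (hw0 e)
      calc _ ≤ _ := this
        _ = _ := by ring
    rw [hdist]
    calc _ ≤ 2 / m * (m * ∑ e, w e * (if f e y - f e x = 0 then 0 else 1)) := by gcongr
      _ = _ := by field_simp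
  have hup : dist (F x) (F y) ^ 2 ≤ 2 * dQ m src tgt T₀ x y := by
    rw [hdist, dQ_eq]
    gcongr with e _
    exact (hb e).1
  exact ⟨(Real.sqrt_le_left dist_nonneg).2 hlow, Real.le_sqrt_of_sq_le hup⟩
end
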